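/- arXiv:1602.08247 — 6 statements merged into one kernel-verified Lean document; each statement's English description precedes it below -/
import Mathlib

section
/- For every n ≥ 1, the permutahedron P_n is a polytope of dimension n − 1: the direction of the affine span of P_n in ℝⁿ has dimension (finrank over ℝ) equal to n − 1. -/
open scoped BigOperators

/-- The vertex of the permutahedron associated to a permutation `σ` of `[n]`:
the vector `(σ⁻¹(1), …, σ⁻¹(n))`, with values in `{1, …, n}`. -/
noncomputable def permVec (n : ℕ) (σ : Equiv.Perm (Fin n)) : EuclideanSpace ℝ (Fin n) :=
  WithLp.toLp 2 fun i => ((σ.symm i : ℕ) + 1 : ℝ)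

/-- The permutahedron `P_n ⊆ ℝⁿ`: the convex hull of the vertices `v_σ`. -/
noncomputable def permutahedron (n : ℕ) : Set (EuclideanSpace ℝ (Fin n)) :=
  convexHull ℝ (Set.range (permVec n))

theorem permutahedron_direction (n : ℕ) (hn : 1 ≤ n) :
    (affineSpan ℝ (permutahedron n)).direction =
      (Submodule.span ℝ {(WithLp.toLp 2 fun _ => (1 : ℝ) : EuclideanSpace ℝ (Fin n))})ᗮ := by
  rw [permutahedron, affineSpan_convexHull, direction_affineSpan]
  apply le_antisymm
  · rw [vectorSpan_def, Submodule.span_le]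
    rintro _ ⟨_, ⟨σ, rfl⟩, _, ⟨τ, rfl⟩, rfl⟩
    have key : ∀ σ : Equiv.Perm (Fin n),
        ∑ i, ((σ.symm i : ℕ) + 1 : ℝ) = ∑ i : Fin n, ((i : ℕ) + 1 : ℝ) := fun σ =>
      Equiv.sum_comp σ.symm (fun i : Fin n => ((i : ℕ) + 1 : ℝ))
    rw [SetLike.mem_coe, Submodule.mem_orthogonal_singleton_iff_inner_right]
    simp only [vsub_eq_sub, inner_sub_right, PiLp.inner_apply, permVec]
    simp only [RCLike.inner_apply, conj_trivial, mul_one]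
    rw [key, key, sub_self]
  · rw [← Submodule.orthogonal_orthogonal (vectorSpan ℝ (Set.range (permVec n)))]
    apply Submodule.orthogonal_le
    intro w hw
    rw [Submodule.mem_orthogonal] at hw
    have h : ∀ i j, w i = w j := by
      intro i j
      by_cases hij : i = j
      · rw [hij]
      have h1 := hw _ (vsub_mem_vectorSpan ℝ (Set.mem_range_self (f := permVec n) (Equiv.refl _))
        (Set.mem_range_self (f := permVec n) (Equiv.swap i j)))
      have h2 : permVec n (Equiv.refl _) -ᵥ permVec n (Equiv.swap i j) =
          (((i : ℕ) : ℝ) - ((j : ℕ) : ℝ)) •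
            (EuclideanSpace.single i (1 : ℝ) - EuclideanSpace.single j (1 : ℝ)) := by
        ext k
        by_cases hki : k = i
        · subst hki
          simp [permVec, hij]
        · by_cases hkj : k = j
          · subst hkj
            simp [permVec, hki]
          · simp [permVec, hki, hkj, Equiv.swap_apply_of_ne_of_ne]
      rw [h2, inner_smul_left, inner_sub_left, EuclideanSpace.inner_single_left,
        EuclideanSpace.inner_single_left] at h1
      have h3 : ((i : ℕ) : ℝ) - ((j : ℕ) : ℝ) ≠ 0 := by
        rw [sub_ne_zero]
        exact fun h => hij (Fin.ext (Nat.cast_injective h))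
      simp only [conj_trivial, one_mul, mul_eq_zero, h3, false_or] at h1
      exact sub_eq_zero.mp h1
    rw [Submodule.mem_span_singleton]
    refine ⟨w ⟨0, hn⟩, ?_⟩
    ext k
    simp [h k ⟨0, hn⟩]

/-- `P_n` is a polytope of dimension `n - 1`: the direction of its affine span
has dimension `n - 1`. -/
theorem permutahedron_dim (n : ℕ) (hn : 1 ≤ n) :
    Module.finrank ℝ (affineSpan ℝ (permutahedron n)).direction = n - 1 := by
  rw [permutahedron_direction n hn]
  have : Fact (Module.finrank ℝ (EuclideanSpace ℝ (Fin n)) = (n - 1) + 1) :=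
    ⟨by rw [finrank_euclideanSpace_fin]; omega⟩
  apply Submodule.finrank_orthogonal_span_singleton
  intro h
  have := congrArg (fun v : EuclideanSpace ℝ (Fin n) => v ⟨0, hn⟩) h
  simp at this
end

section
/- Let n ≥ 2 and let σ, τ be distinct permutations of [n]. Then the Euclidean distance ‖v_σ − v_τ‖ ≥ √2, and equality holds if and only if there exists j ∈ {1,…,n−1} such that τ = σ ∘ (j j+1), where (j j+1) denotes the transposition of [n] exchanging j and j+1 (equivalently, v_τ is obtained from v_σ by switching two coordinate values that differ by 1). In particular, √2 is the minimal distance between two distinct vertices of the permutahedron P_n. -/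
open scoped BigOperators

theorem permAux_one {z : ℤ} (h : z ^ 2 = 1) : z = 1 ∨ z = -1 := by
  simpa using h

theorem permAux_split {n : ℕ} (π : Equiv.Perm (Fin n)) (a : Fin n) (ha : π a ≠ a) :
    ∑ k : Fin n, (((k : ℕ) : ℤ) - ((π k : ℕ) : ℤ)) ^ 2 =
      (((a : ℕ) : ℤ) - ((π a : ℕ) : ℤ)) ^ 2 +
      ((((π a : Fin n) : ℕ) : ℤ) - ((π (π a) : ℕ) : ℤ)) ^ 2 +
      ∑ k ∈ (Finset.univ.erase a).erase (π a), (((k : ℕ) : ℤ) - ((π k : ℕ) : ℤ)) ^ 2 := by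
  rw [← Finset.add_sum_erase Finset.univ _ (Finset.mem_univ a),
    ← Finset.add_sum_erase (Finset.univ.erase a) _ (Finset.mem_erase.2 ⟨ha, Finset.mem_univ (π a)⟩),
    add_assoc]

theorem permAux_sq {n : ℕ} (x y : Fin n) (h : y ≠ x) :
    1 ≤ (((x : ℕ) : ℤ) - ((y : ℕ) : ℤ)) ^ 2 := by
  have : ((x : ℕ) : ℤ) - ((y : ℕ) : ℤ) ≠ 0 := by
    intro h'
    apply h
    ext
    omega
  have := sq_pos_of_ne_zero this
  omega

theorem permAux_ge {n : ℕ} (π : Equiv.Perm (Fin n)) (h : π ≠ 1) :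
    2 ≤ ∑ k : Fin n, (((k : ℕ) : ℤ) - ((π k : ℕ) : ℤ)) ^ 2 := by
  obtain ⟨a, ha⟩ : ∃ a, π a ≠ a := by
    by_contra! hc
    exact h (Equiv.ext hc)
  rw [permAux_split π a ha]
  have h1 := permAux_sq a (π a) ha
  have h2 := permAux_sq (π a) (π (π a)) (fun h => ha (π.injective h))
  have h3 : 0 ≤ ∑ k ∈ (Finset.univ.erase a).erase (π a), (((k : ℕ) : ℤ) - ((π k : ℕ) : ℤ)) ^ 2 :=
    Finset.sum_nonneg fun _ _ => sq_nonneg _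
  linarith

theorem permAux_eq {n : ℕ} (π : Equiv.Perm (Fin n)) (h : π ≠ 1)
    (hs : ∑ k : Fin n, (((k : ℕ) : ℤ) - ((π k : ℕ) : ℤ)) ^ 2 = 2) :
    ∃ j : ℕ, ∃ hj : j + 1 < n,
      π = Equiv.swap (⟨j, Nat.lt_of_succ_lt hj⟩ : Fin n) (⟨j + 1, hj⟩ : Fin n) := by
  obtain ⟨a, ha⟩ : ∃ a, π a ≠ a := by
    by_contra! hc
    exact h (Equiv.ext hc)
  rw [permAux_split π a ha] at hs
  have h1 := permAux_sq a (π a) ha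
  have h2 := permAux_sq (π a) (π (π a)) (fun h => ha (π.injective h))
  have h3 : 0 ≤ ∑ k ∈ (Finset.univ.erase a).erase (π a), (((k : ℕ) : ℤ) - ((π k : ℕ) : ℤ)) ^ 2 :=
    Finset.sum_nonneg fun _ _ => sq_nonneg _
  have h4 : ∑ k ∈ (Finset.univ.erase a).erase (π a),
      (((k : ℕ) : ℤ) - ((π k : ℕ) : ℤ)) ^ 2 = 0 := by linarith
  have h5 : (((a : ℕ) : ℤ) - ((π a : ℕ) : ℤ)) ^ 2 = 1 := by linarith
  have hfix : ∀ k, k ≠ a → k ≠ π a → π k = k := by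
    intro k hka hkb
    by_contra hk
    have h6 := (Finset.sum_eq_zero_iff_of_nonneg (fun _ _ => sq_nonneg _)).1 h4 k
      (by simp [hka, hkb])
    have := permAux_sq k (π k) hk
    omega
  have hba : π (π a) = a := by
    by_contra hc
    have hb : π (π a) ≠ π a := fun h => ha (π.injective h)
    exact hb (π.injective (hfix _ hc hb))
  have hsw : π = Equiv.swap a (π a) := by
    ext k
    by_cases hka : k = a
    · subst hka; simp
    by_cases hkb : k = π a
    · rw [hkb, hba]; simp
    rw [hfix k hka hkb, Equiv.swap_apply_of_ne_of_ne hka hkb]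
  rcases (permAux_one h5) with h6 | h6
  · refine ⟨π a, by omega, ?_⟩
    refine hsw.trans ?_
    rw [Equiv.swap_comm]
    congr 1
    ext; simp; omega
  · refine ⟨a, by omega, ?_⟩
    refine hsw.trans ?_
    congr 1
    ext; simp; omega

theorem permAux_dist {n : ℕ} (σ τ : Equiv.Perm (Fin n)) :
    dist (permVec n σ) (permVec n τ) = Real.sqrt
      ((∑ k : Fin n, (((k : ℕ) : ℤ) - (((τ⁻¹ * σ) k : ℕ) : ℤ)) ^ 2 : ℤ) : ℝ) := by
  rw [EuclideanSpace.dist_eq, ← Equiv.sum_comp σ]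
  push_cast
  congr 1
  refine Finset.sum_congr rfl fun k _ => ?_
  simp [permVec, Real.dist_eq, sq_abs]

/-- For distinct permutations `σ ≠ τ` of `[n]` (`n ≥ 2`), the Euclidean distance between
the vertices `v_σ` and `v_τ` of `P_n` is at least `√2`, with equality if and only if
`τ = σ ∘ (j j+1)` for some adjacent transposition `(j j+1)`.  In particular `√2` is the
minimal distance between distinct vertices of the permutahedron. -/
theorem dist_permVec (n : ℕ) (hn : 2 ≤ n) (σ τ : Equiv.Perm (Fin n)) (hστ : σ ≠ τ) :
    Real.sqrt 2 ≤ dist (permVec n σ) (permVec n τ) ∧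
    (dist (permVec n σ) (permVec n τ) = Real.sqrt 2 ↔
      ∃ j : ℕ, ∃ hj : j + 1 < n,
        τ = σ * Equiv.swap (⟨j, Nat.lt_of_succ_lt hj⟩ : Fin n) (⟨j + 1, hj⟩ : Fin n)) := by
  set π := τ⁻¹ * σ with hπ
  have h1 : π ≠ 1 := fun h => hστ (inv_mul_eq_one.1 h).symm
  have hge := permAux_ge π h1
  rw [permAux_dist, ← hπ]
  refine ⟨Real.sqrt_le_sqrt (by exact_mod_cast hge), ?_⟩
  rw [Real.sqrt_inj (Int.cast_nonneg (le_trans (by norm_num) hge)) (by norm_num)]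
  constructor
  · intro h
    obtain ⟨j, hj, h⟩ := permAux_eq π h1 (by exact_mod_cast h)
    refine ⟨j, hj, ?_⟩
    rw [← Equiv.swap_inv, ← h, hπ]
    group
  · rintro ⟨j, hj, h⟩
    have hsw : π = Equiv.swap (⟨j, Nat.lt_of_succ_lt hj⟩ : Fin n) (⟨j + 1, hj⟩ : Fin n) := by
      rw [hπ, h, mul_inv_rev, Equiv.swap_inv]
      group
    have hne : (⟨j + 1, hj⟩ : Fin n) ≠ ⟨j, Nat.lt_of_succ_lt hj⟩ := by simp
    have hs := permAux_split π ⟨j, Nat.lt_of_succ_lt hj⟩ (by rw [hsw, Equiv.swap_apply_left]; exact hne)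
    rw [Finset.sum_eq_zero (s := (Finset.univ.erase _).erase _)] at hs
    · rw [hs, hsw]
      simp
    · intro k hk
      rw [hsw] at hk ⊢
      rw [Equiv.swap_apply_left] at hk
      simp only [Finset.mem_erase, Finset.mem_univ, and_true] at hk
      rw [Equiv.swap_apply_of_ne_of_ne hk.2 hk.1]
      simp
end

section
/- Let n ≥ 2 and let σ, τ be distinct permutations of [n]. The closed segment [v_σ, v_τ] is an exposed face of the permutahedron P_n if and only if there exists j ∈ {1,…,n−1} such that τ = σ ∘ (j j+1), where (j j+1) denotes the transposition of [n] exchanging j and j+1. That is, two vertices of P_n are adjacent (joined by an edge) exactly when one is obtained from the other by switching two coordinate values differing by 1. -/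
open scoped BigOperators

lemma permVec_clm {n : ℕ} (l : StrongDual ℝ (EuclideanSpace ℝ (Fin n))) (ρ : Equiv.Perm (Fin n)) :
    l (permVec n ρ) = ∑ k, l (EuclideanSpace.single (ρ k) 1) * ((k : ℕ) + 1 : ℝ) := by
  have h : permVec n ρ = ∑ i, ((ρ.symm i : ℕ) + 1 : ℝ) • EuclideanSpace.single i (1 : ℝ) := by
    ext j
    simp [permVec, Pi.single_apply]
  rw [h, map_sum, ← Equiv.sum_comp ρ]
  simp [mul_comm]

lemma swap_sum {n : ℕ} (d : Fin n → ℝ) (a b : Fin n) (hab : a ≠ b) :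
    ∑ k, d (Equiv.swap a b k) * ((k : ℕ) + 1 : ℝ) =
      ∑ k, d k * ((k : ℕ) + 1 : ℝ) + (d a - d b) * ((b : ℕ) - (a : ℕ) : ℝ) := by
  have h : ∑ k, (d (Equiv.swap a b k) * ((k : ℕ) + 1 : ℝ) - d k * ((k : ℕ) + 1 : ℝ)) =
      (d a - d b) * ((b : ℕ) - (a : ℕ) : ℝ) := by
    rw [← Finset.sum_subset (Finset.subset_univ {a, b}), Finset.sum_pair hab]
    · simp; ring
    · intro x _ hx
      simp only [Finset.mem_insert, Finset.mem_singleton, not_or] at hx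
      rw [Equiv.swap_apply_of_ne_of_ne hx.1 hx.2]; ring
  rw [Finset.sum_sub_distrib] at h
  linarith

lemma permVec_norm {n : ℕ} (σ τ : Equiv.Perm (Fin n)) : ‖permVec n σ‖ = ‖permVec n τ‖ := by
  have h : ∀ ρ : Equiv.Perm (Fin n), ‖permVec n ρ‖ = √(∑ k : Fin n, ‖((k : ℕ) + 1 : ℝ)‖ ^ 2) := by
    intro ρ
    rw [EuclideanSpace.norm_eq, ← Equiv.sum_comp ρ]
    simp [permVec]
  rw [h, h]

lemma permVec_inj {n : ℕ} : Function.Injective (permVec n) := by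
  intro σ τ h
  have : σ.symm = τ.symm := by
    ext i
    have := congrArg (fun v : EuclideanSpace ℝ (Fin n) => v i) h
    simpa [permVec] using this
  simpa using congrArg Equiv.symm this

lemma permVec_mem_segment {n : ℕ} {σ τ ρ : Equiv.Perm (Fin n)}
    (h : permVec n ρ ∈ segment ℝ (permVec n σ) (permVec n τ)) : ρ = σ ∨ ρ = τ := by
  by_cases hst : σ = τ
  · subst hst
    rw [segment_same] at h
    exact Or.inl (permVec_inj h)
  obtain ⟨a, b, ha, hb, hab, h⟩ := h
  rcases ha.eq_or_lt with rfl | ha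
  · right
    apply permVec_inj
    rw [← h]
    have : b = 1 := by linarith
    simp [this]
  rcases hb.eq_or_lt with rfl | hb
  · left
    apply permVec_inj
    rw [← h]
    have : a = 1 := by linarith
    simp [this]
  exfalso
  have := norm_combo_lt_of_ne (permVec_norm σ ρ).le (permVec_norm τ ρ).le
    (fun e => hst (permVec_inj e)) ha hb hab
  rw [h] at this
  exact lt_irrefl _ this

lemma permVec_mem {n : ℕ} (ρ : Equiv.Perm (Fin n)) : permVec n ρ ∈ permutahedron n :=
  subset_convexHull ℝ _ ⟨ρ, rfl⟩

lemma mono_of_max {n : ℕ} (l : StrongDual ℝ (EuclideanSpace ℝ (Fin n))) (σ : Equiv.Perm (Fin n))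
    (h : ∀ ρ, l (permVec n ρ) ≤ l (permVec n σ)) :
    Monotone fun k => l (EuclideanSpace.single (σ k) 1) := by
  intro a b hab
  rcases hab.eq_or_lt with rfl | hab
  · exact le_rfl
  have h1 := h (σ * Equiv.swap a b)
  rw [permVec_clm, permVec_clm] at h1
  have h2 := swap_sum (fun k => l (EuclideanSpace.single (σ k) 1)) a b hab.ne
  simp only [Equiv.Perm.mul_apply] at h1
  have h3 : ((a : ℕ) : ℝ) < (b : ℕ) := by exact_mod_cast hab
  dsimp only at h2 ⊢
  by_contra! hc
  nlinarith [mul_pos (sub_pos.2 hc) (sub_pos.2 h3)]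

/-- the weights -/
noncomputable def wt (j : ℕ) (k : ℕ) : ℝ := if k ≤ j then k else k - 1

lemma wt_mono (j : ℕ) : Monotone (wt j) := by
  intro a b hab
  have h : (a : ℝ) ≤ b := by exact_mod_cast hab
  unfold wt
  split_ifs with h1 h2 h2
  · exact h
  · have : (a + 1 : ℝ) ≤ b := by exact_mod_cast (by omega : a + 1 ≤ b)
    linarith
  · omega
  · linarith

lemma wt_eq {j a b : ℕ} (h : wt j a = wt j b) :
    a = b ∨ (a = j ∧ b = j + 1) ∨ (a = j + 1 ∧ b = j) := by
  unfold wt at h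
  split_ifs at h with h1 h2 h2
  · left; exact_mod_cast h
  · have : a + 1 = b := by
      have : (a + 1 : ℝ) = b := by linarith
      exact_mod_cast this
    omega
  · have : a = b + 1 := by
      have : (a : ℝ) = b + 1 := by linarith
      exact_mod_cast this
    omega
  · left
    have : (a : ℝ) = b := by linarith
    exact_mod_cast this

lemma perm_cases {n j : ℕ} (hj : j + 1 < n) (π : Equiv.Perm (Fin n))
    (h : ∀ k, wt j (π k : ℕ) = wt j (k : ℕ)) :
    π = 1 ∨ π = Equiv.swap (⟨j, Nat.lt_of_succ_lt hj⟩ : Fin n) (⟨j + 1, hj⟩ : Fin n) := by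
  have h' : ∀ k, π k = k ∨ (π k = ⟨j, Nat.lt_of_succ_lt hj⟩ ∧ k = ⟨j + 1, hj⟩) ∨
      (π k = ⟨j + 1, hj⟩ ∧ k = ⟨j, Nat.lt_of_succ_lt hj⟩) := by
    intro k
    simpa only [Fin.ext_iff] using wt_eq (h k)
  have hne : (⟨j, Nat.lt_of_succ_lt hj⟩ : Fin n) ≠ ⟨j + 1, hj⟩ := by simp
  generalize (⟨j, Nat.lt_of_succ_lt hj⟩ : Fin n) = A at *
  generalize (⟨j + 1, hj⟩ : Fin n) = B at *
  have hi := π.injective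
  have hA := h' A
  have hB := h' B
  by_cases hc : π A = A
  · left
    ext1 k
    have := h' k
    have := @hi k A
    have := @hi k B
    simp only [Equiv.Perm.one_apply]
    grind
  · right
    ext1 k
    have := h' k
    have := @hi k A
    have := @hi k B
    have := @hi A B
    rw [Equiv.swap_apply_def]
    grind

theorem segment_isExposed_iff (n : ℕ) (hn : 2 ≤ n) (σ τ : Equiv.Perm (Fin n)) (hστ : σ ≠ τ) :
    IsExposed ℝ (permutahedron n) (segment ℝ (permVec n σ) (permVec n τ)) ↔
      ∃ j : ℕ, ∃ hj : j + 1 < n,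
        τ = σ * Equiv.swap (⟨j, Nat.lt_of_succ_lt hj⟩ : Fin n) (⟨j + 1, hj⟩ : Fin n) := by
  constructor
  · intro h
    obtain ⟨l, hl⟩ := h ⟨_, left_mem_segment ℝ _ _⟩
    have hσ := left_mem_segment ℝ (permVec n σ) (permVec n τ)
    have hτ := right_mem_segment ℝ (permVec n σ) (permVec n τ)
    rw [hl] at hσ hτ
    have mσ := mono_of_max l σ fun ρ => hσ.2 _ (permVec_mem ρ)
    have mτ := mono_of_max l τ fun ρ => hτ.2 _ (permVec_mem ρ)
    by_cases hex : ∃ j : ℕ, ∃ hj : j + 1 < n,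
        l (EuclideanSpace.single (σ ⟨j, Nat.lt_of_succ_lt hj⟩) 1) =
          l (EuclideanSpace.single (σ ⟨j + 1, hj⟩) 1)
    · obtain ⟨j, hj, he⟩ := hex
      refine ⟨j, hj, ?_⟩
      have hne : (⟨j, Nat.lt_of_succ_lt hj⟩ : Fin n) ≠ ⟨j + 1, hj⟩ := by simp
      generalize (⟨j, Nat.lt_of_succ_lt hj⟩ : Fin n) = A at *
      generalize (⟨j + 1, hj⟩ : Fin n) = B at *
      have h2 := swap_sum (fun k => l (EuclideanSpace.single (σ k) 1)) A B hne
      have h3 : l (permVec n (σ * Equiv.swap A B)) = l (permVec n σ) := by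
        rw [permVec_clm, permVec_clm]
        simp only [Equiv.Perm.mul_apply]
        rw [h2, he]; ring
      have h4 : permVec n (σ * Equiv.swap A B) ∈ segment ℝ (permVec n σ) (permVec n τ) := by
        rw [hl]
        exact ⟨permVec_mem _, fun y hy => h3 ▸ hσ.2 y hy⟩
      rcases permVec_mem_segment h4 with h5 | h5
      · exfalso
        have : Equiv.swap A B = 1 := by simpa using h5
        exact hne (Equiv.swap_eq_one_iff.1 this)
      · exact h5.symm
    · exfalso
      have sσ : StrictMono fun k => l (EuclideanSpace.single (σ k) 1) := by
        intro a b hab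
        refine lt_of_le_of_ne (mσ hab.le) fun he => hex ⟨a, by omega, ?_⟩
        refine le_antisymm (mσ (by simp [Fin.le_def])) ?_
        refine le_trans (mσ (b := b) ?_) he.ge
        simp only [Fin.le_def]; omega
      have hu : (fun i => l (EuclideanSpace.single i (1 : ℝ))) ∘ σ =
          (fun i => l (EuclideanSpace.single i (1 : ℝ))) ∘ τ := Tuple.unique_monotone mσ mτ
      apply hστ
      ext1 k
      have h1 := congrFun hu k
      have h2 : σ.symm (τ k) = k := sσ.injective (by simpa using h1.symm)
      exact (Equiv.symm_apply_eq _).1 h2 |>.symm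
  · rintro ⟨j, hj, hτ⟩ -
    let l : StrongDual ℝ (EuclideanSpace ℝ (Fin n)) :=
      ∑ i, wt j (σ.symm i : ℕ) • EuclideanSpace.proj (𝕜 := ℝ) i
    have hl : ∀ i, l (EuclideanSpace.single i 1) = wt j (σ.symm i : ℕ) := by
      intro i
      simp [l]
    have hval : ∀ ρ, l (permVec n ρ) = ∑ k, wt j (σ.symm (ρ k) : ℕ) * ((k : ℕ) + 1 : ℝ) := by
      intro ρ
      rw [permVec_clm]; simp only [hl]
    have hvσ : l (permVec n σ) = ∑ k : Fin n, wt j (k : ℕ) * ((k : ℕ) + 1 : ℝ) := by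
      rw [hval]; simp
    -- a maximiser among the vertices
    obtain ⟨ρ₀, hρ₀⟩ := Finite.exists_max fun ρ => l (permVec n ρ)
    have hmono : ∀ ρ, (∀ ρ', l (permVec n ρ') ≤ l (permVec n ρ)) →
        ∀ k, wt j (σ.symm (ρ k) : ℕ) = wt j (k : ℕ) := by
      intro ρ hρ k
      have h1 := mono_of_max l ρ hρ
      simp only [hl] at h1
      have h2 : Monotone ((fun k : Fin n => wt j (k : ℕ)) ∘ (1 : Equiv.Perm (Fin n))) :=
        fun a b hab => wt_mono j hab
      have h3 : Monotone ((fun k : Fin n => wt j (k : ℕ)) ∘ (σ⁻¹ * ρ : Equiv.Perm (Fin n))) := h1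
      exact congrFun (Tuple.unique_monotone h3 h2) k
    have hmax : ∀ ρ, l (permVec n ρ) ≤ l (permVec n σ) := by
      intro ρ
      refine (hρ₀ ρ).trans_eq ?_
      rw [hvσ, hval]
      simp only [hmono ρ₀ hρ₀]
    have hcase : ∀ ρ, l (permVec n ρ) = l (permVec n σ) → ρ = σ ∨ ρ = τ := by
      intro ρ hρ
      rcases perm_cases hj (σ⁻¹ * ρ) (hmono ρ fun ρ' => hρ ▸ hmax ρ') with h | h
      · left; exact (inv_mul_eq_one.1 h).symm
      · right; rw [hτ, ← h]; simp
    have hlτ : l (permVec n τ) = l (permVec n σ) := by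
      rw [hτ, hval, hvσ]
      simp only [Equiv.Perm.mul_apply, Equiv.symm_apply_apply]
      rw [swap_sum (fun k : Fin n => wt j (k : ℕ)) _ _ (by simp)]
      simp [wt]
    have hle : ∀ y ∈ permutahedron n, l y ≤ l (permVec n σ) := by
      intro y hy
      have hc : Convex ℝ {y | l y ≤ l (permVec n σ)} :=
        convex_halfSpace_le l.toLinearMap.isLinear _
      exact convexHull_min (by rintro _ ⟨ρ, rfl⟩; exact hmax ρ) hc hy
    refine ⟨l, Set.Subset.antisymm ?_ ?_⟩
    · intro x hx
      refine ⟨(convex_convexHull ℝ _).segment_subset (permVec_mem σ) (permVec_mem τ) hx, ?_⟩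
      obtain ⟨a, b, ha, hb, hab, rfl⟩ := hx
      intro y hy
      rw [map_add, map_smul, map_smul, hlτ, smul_eq_mul, smul_eq_mul, ← add_mul, hab, one_mul]
      exact hle y hy
    · rintro x ⟨hx, hxm⟩
      have hxe : l x = l (permVec n σ) := le_antisymm (hle x hx) (hxm _ (permVec_mem σ))
      have hS : Convex ℝ {x | l x ≤ l (permVec n σ) ∧
          (l x = l (permVec n σ) → x ∈ segment ℝ (permVec n σ) (permVec n τ))} := by
        rw [convex_iff_forall_pos]
        rintro x ⟨hx1, hx2⟩ y ⟨hy1, hy2⟩ a b ha hb hab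
        have hM : l (permVec n σ) = a * l (permVec n σ) + b * l (permVec n σ) := by
          rw [← add_mul, hab, one_mul]
        have e : l (a • x + b • y) = a * l x + b * l y := by simp
        have h1 := mul_le_mul_of_nonneg_left hx1 ha.le
        have h2 := mul_le_mul_of_nonneg_left hy1 hb.le
        refine ⟨by rw [e]; linarith, fun h => ?_⟩
        rw [e] at h
        have h3 : a * l x = a * l (permVec n σ) := by linarith
        have h4 : b * l y = b * l (permVec n σ) := by linarith
        exact convex_segment _ _ (hx2 (mul_left_cancel₀ ha.ne' h3))
          (hy2 (mul_left_cancel₀ hb.ne' h4)) ha.le hb.le hab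
      refine (convexHull_min ?_ hS hx).2 hxe
      rintro _ ⟨ρ, rfl⟩
      refine ⟨hmax ρ, fun h => ?_⟩
      rcases hcase ρ h with rfl | rfl
      · exact left_mem_segment ℝ _ _
      · exact right_mem_segment ℝ _ _
end

section
/- Let n ≥ 1, let k ≥ 1, and let (B₁, …, B_k) be an ordered partition of [n] into nonempty pairwise disjoint sets with union [n]. For 1 ≤ r ≤ k set M_r = |B₁| + … + |B_r|. Then the convex hull of {v_τ : τ compatible with (B₁, …, B_k)} equals the set {x ∈ P_n : ∀ r ∈ {1,…,k}, ∑_{i ∈ B₁ ∪ … ∪ B_r} x_i = M_r(M_r+1)/2}. -/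
open scoped BigOperators

/-- A permutation `τ` of `[n]` is compatible with the ordered partition `(B 0, …, B (k-1))`
of `[n]` if for all `p < q`, `i ∈ B p` and `j ∈ B q` imply `τ⁻¹(i) < τ⁻¹(j)`. -/
def PermCompatible (n k : ℕ) (B : Fin k → Finset (Fin n)) (τ : Equiv.Perm (Fin n)) : Prop :=
  ∀ p q : Fin k, p < q → ∀ i ∈ B p, ∀ j ∈ B q, τ.symm i < τ.symm j

theorem aux_sum_range (m : ℕ) : (∑ s ∈ Finset.range m, (s + 1)) * 2 = m * (m + 1) := by
  induction m with
  | zero => simp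
  | succ m ih => rw [Finset.sum_range_succ, add_mul, ih]; ring

theorem aux_sum_ge (S : Finset ℕ) :
    S.card * (S.card + 1) + 2 * (S \ Finset.range S.card).card ≤ (∑ s ∈ S, (s + 1)) * 2 := by
  set m := S.card with hm
  rw [← aux_sum_range m]
  have h1 := Finset.sum_inter_add_sum_sdiff S (Finset.range m) (fun s => s + 1)
  have h2 := Finset.sum_inter_add_sum_sdiff (Finset.range m) S (fun s => s + 1)
  have c1 := Finset.card_inter_add_card_sdiff S (Finset.range m)
  have c2 := Finset.card_inter_add_card_sdiff (Finset.range m) S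
  rw [Finset.inter_comm] at h2 c2
  rw [Finset.card_range] at c2
  have hc : (Finset.range m \ S).card = (S \ Finset.range m).card := by omega
  have b1 : (S \ Finset.range m).card * (m + 1) ≤ ∑ s ∈ S \ Finset.range m, (s + 1) := by
    rw [← smul_eq_mul]
    apply Finset.card_nsmul_le_sum
    intro x hx
    simp at hx
    omega
  have b2 : ∑ s ∈ Finset.range m \ S, (s + 1) ≤ (Finset.range m \ S).card * m := by
    rw [← smul_eq_mul]
    apply Finset.sum_le_card_nsmul
    intro x hx
    simp at hx
    omega
  rw [hc] at b2
  rw [mul_add] at b1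
  omega

theorem aux_sum_eq (S : Finset ℕ) (h : (∑ s ∈ S, (s + 1)) * 2 = S.card * (S.card + 1)) :
    S = Finset.range S.card := by
  have h1 := aux_sum_ge S
  have h2 : (S \ Finset.range S.card).card = 0 := by omega
  rw [Finset.card_eq_zero, Finset.sdiff_eq_empty_iff_subset] at h2
  exact Finset.eq_of_subset_of_card_le h2 (by simp)

theorem aux_lower (S : Finset ℕ) (h : ∀ a b, b ∈ S → a < b → a ∈ S) :
    S = Finset.range S.card := by
  apply Finset.eq_of_subset_of_card_le _ (by simp)
  intro s hs
  have : Finset.range (s + 1) ⊆ S := by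
    intro a ha
    rcases (Nat.lt_succ_iff.1 (Finset.mem_range.1 ha)).lt_or_eq with h1 | h1
    · exact h a s hs h1
    · exact h1 ▸ hs
  have := Finset.card_le_card this
  simp at this ⊢
  omega

/-- positions of the elements of `T` -/
def posSet {n : ℕ} (σ : Equiv.Perm (Fin n)) (T : Finset (Fin n)) : Finset ℕ :=
  T.image fun i => (σ.symm i : ℕ)

theorem aux_inj {n : ℕ} (σ : Equiv.Perm (Fin n)) :
    Function.Injective fun i => (σ.symm i : ℕ) :=
  Fin.val_injective.comp σ.symm.injective

theorem posSet_card {n : ℕ} (σ : Equiv.Perm (Fin n)) (T : Finset (Fin n)) :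
    (posSet σ T).card = T.card := Finset.card_image_of_injective _ (aux_inj σ)

theorem posSet_sum {n : ℕ} (σ : Equiv.Perm (Fin n)) (T : Finset (Fin n)) :
    ∑ i ∈ T, permVec n σ i = ((∑ s ∈ posSet σ T, (s + 1) : ℕ) : ℝ) := by
  rw [posSet, Finset.sum_image (fun a _ b _ h => aux_inj σ h)]
  simp [permVec]

theorem vert_ge {n : ℕ} (σ : Equiv.Perm (Fin n)) (T : Finset (Fin n)) :
    (T.card : ℝ) * (T.card + 1) / 2 ≤ ∑ i ∈ T, permVec n σ i := by
  rw [posSet_sum]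
  have h := aux_sum_ge (posSet σ T)
  rw [posSet_card] at h
  have h' : T.card * (T.card + 1) ≤ (∑ s ∈ posSet σ T, (s + 1)) * 2 := by omega
  rw [div_le_iff₀ (by norm_num)]
  exact_mod_cast h'

theorem vert_eq_iff {n : ℕ} (σ : Equiv.Perm (Fin n)) (T : Finset (Fin n)) :
    ∑ i ∈ T, permVec n σ i = (T.card : ℝ) * (T.card + 1) / 2 ↔
      ∀ i ∈ T, ∀ j ∉ T, σ.symm i < σ.symm j := by
  have key : ∑ i ∈ T, permVec n σ i = (T.card : ℝ) * (T.card + 1) / 2 ↔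
      posSet σ T = Finset.range (posSet σ T).card := by
    rw [posSet_sum, eq_div_iff (by norm_num)]
    constructor
    · intro h
      apply aux_sum_eq
      rw [posSet_card]
      exact_mod_cast h
    · intro h
      rw [h, posSet_card]
      exact_mod_cast aux_sum_range T.card
  rw [key]
  constructor
  · intro h i hi j hj
    have h1 : (σ.symm i : ℕ) ∈ posSet σ T := Finset.mem_image_of_mem _ hi
    have h2 : (σ.symm j : ℕ) ∉ posSet σ T := by
      intro hh
      obtain ⟨a, ha, hb⟩ := Finset.mem_image.1 hh
      exact hj (aux_inj σ hb ▸ ha)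
    rw [h, Finset.mem_range] at h1 h2
    rw [Fin.lt_def]
    omega
  · intro h
    apply aux_lower
    intro a b hb hab
    obtain ⟨i, hi, rfl⟩ := Finset.mem_image.1 hb
    have han : a < n := lt_trans hab (σ.symm i).2
    by_contra hc
    have hj : σ ⟨a, han⟩ ∉ T := by
      intro hh
      exact hc (Finset.mem_image.2 ⟨_, hh, by simp⟩)
    have := h i hi _ hj
    rw [Equiv.symm_apply_apply, Fin.lt_def] at this
    simp at this hab
    omega

theorem compat_iff {n k : ℕ} (B : Fin k → Finset (Fin n))
    (hdisj : ∀ p q, p ≠ q → Disjoint (B p) (B q))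
    (hcov : Finset.univ.biUnion B = Finset.univ) (σ : Equiv.Perm (Fin n)) :
    PermCompatible n k B σ ↔ ∀ r : Fin k,
      ∀ i ∈ (Finset.univ.filter fun p => p ≤ r).biUnion B,
      ∀ j ∉ (Finset.univ.filter fun p => p ≤ r).biUnion B, σ.symm i < σ.symm j := by
  constructor
  · intro h r i hi j hj
    simp only [Finset.mem_biUnion, Finset.mem_filter, Finset.mem_univ, true_and] at hi hj
    obtain ⟨p, hp, hi⟩ := hi
    have hj' : j ∈ Finset.univ.biUnion B := by rw [hcov]; simp
    obtain ⟨q, -, hq⟩ := Finset.mem_biUnion.1 hj'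
    have : r < q := by
      by_contra hc
      exact hj ⟨q, not_lt.1 hc, hq⟩
    exact h p q (lt_of_le_of_lt hp this) i hi j hq
  · intro h p q hpq i hi j hj
    apply h p i
    · simp only [Finset.mem_biUnion, Finset.mem_filter, Finset.mem_univ, true_and]
      exact ⟨p, le_rfl, hi⟩
    · simp only [Finset.mem_biUnion, Finset.mem_filter, Finset.mem_univ, true_and]
      rintro ⟨p', hp', hj'⟩
      have hne : p' ≠ q := (lt_of_le_of_lt hp' hpq).ne
      exact Finset.disjoint_left.1 (hdisj _ _ hne) hj' hj

/-- For an ordered partition `(B 0, …, B (k-1))` of `[n]` into nonempty pairwise disjoint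
sets, with `M r = |B 0| + ⋯ + |B r|`, the convex hull of the compatible vertices equals
the set of points `x ∈ P_n` satisfying, for each `r`,
`∑_{i ∈ B 0 ∪ ⋯ ∪ B r} x i = M r (M r + 1) / 2`. -/
theorem orderedPartition_face_eq (n k : ℕ) (hn : 1 ≤ n) (hk : 1 ≤ k)
    (B : Fin k → Finset (Fin n)) (hne : ∀ r, (B r).Nonempty)
    (hdisj : ∀ p q, p ≠ q → Disjoint (B p) (B q))
    (hcov : Finset.univ.biUnion B = Finset.univ) :
    convexHull ℝ (permVec n '' {τ | PermCompatible n k B τ}) =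
      {x ∈ permutahedron n | ∀ r : Fin k,
        ∑ i ∈ (Finset.univ.filter fun p => p ≤ r).biUnion B, x i =
          ((∑ p ∈ Finset.univ.filter fun p => p ≤ r, (B p).card : ℕ) : ℝ) *
            (((∑ p ∈ Finset.univ.filter fun p => p ≤ r, (B p).card : ℕ) : ℝ) + 1) / 2} := by
  have hcard : ∀ r : Fin k, (∑ p ∈ Finset.univ.filter fun p => p ≤ r, (B p).card) =
      ((Finset.univ.filter fun p => p ≤ r).biUnion B).card := fun r =>
    (Finset.card_biUnion (fun p _ q _ h => hdisj p q h)).symm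
  simp only [hcard]
  have hcomp : ∀ σ, PermCompatible n k B σ ↔ ∀ r : Fin k,
      ∑ i ∈ (Finset.univ.filter fun p => p ≤ r).biUnion B, permVec n σ i =
        (((Finset.univ.filter fun p => p ≤ r).biUnion B).card : ℝ) *
          ((((Finset.univ.filter fun p => p ≤ r).biUnion B).card : ℝ) + 1) / 2 := by
    intro σ
    rw [compat_iff B hdisj hcov]
    exact forall_congr' fun r => (vert_eq_iff σ _).symm
  generalize hU : (fun r : Fin k => (Finset.univ.filter fun p => p ≤ r).biUnion B) = U
  have hU' : ∀ r, (Finset.univ.filter fun p => p ≤ r).biUnion B = U r := fun r => by rw [← hU]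
  simp only [hU'] at hcomp ⊢
  apply Set.Subset.antisymm
  · apply convexHull_min
    · rintro _ ⟨τ, hτ, rfl⟩
      exact ⟨subset_convexHull ℝ _ ⟨τ, rfl⟩, (hcomp τ).1 hτ⟩
    · rintro x ⟨hx, hx'⟩ y ⟨hy, hy'⟩ a b ha hb hab
      refine ⟨convex_convexHull ℝ _ hx hy ha hb hab, fun r => ?_⟩
      simp only [PiLp.add_apply, PiLp.smul_apply, smul_eq_mul, Finset.sum_add_distrib,
        ← Finset.mul_sum]
      rw [hx', hy', ← add_mul, hab, one_mul]
  · rintro x ⟨hx, hx'⟩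
    obtain ⟨w, hw0, hw1, rfl⟩ : ∃ w : Equiv.Perm (Fin n) → ℝ, (∀ σ, 0 ≤ w σ) ∧ ∑ σ, w σ = 1 ∧
        ∑ σ, w σ • permVec n σ = x := by
      have hr : Set.range (permVec n) ⊆ {x | ∃ w : Equiv.Perm (Fin n) → ℝ,
          (∀ σ, 0 ≤ w σ) ∧ ∑ σ, w σ = 1 ∧ ∑ σ, w σ • permVec n σ = x} := by
        rintro _ ⟨σ, rfl⟩
        refine ⟨Pi.single σ 1, fun τ => ?_, by simp, ?_⟩
        · by_cases h : τ = σ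
          · subst h; simp
          · simp [h]
        · rw [Finset.sum_eq_single σ]
          · simp
          · intro τ _ h
            simp [h]
          · simp
      refine convexHull_min hr ?_ hx
      rintro _ ⟨u, hu, hu1, rfl⟩ _ ⟨v, hv, hv1, rfl⟩ a b ha hb hab
      refine ⟨fun σ => a * u σ + b * v σ, fun σ => ?_, ?_, ?_⟩
      · exact add_nonneg (mul_nonneg ha (hu σ)) (mul_nonneg hb (hv σ))
      · rw [Finset.sum_add_distrib, ← Finset.mul_sum, ← Finset.mul_sum, hu1, hv1]
        simpa using hab
      · simp only [add_smul, mul_smul, Finset.sum_add_distrib, Finset.smul_sum]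
    have hz : ∀ σ, w σ ≠ 0 → PermCompatible n k B σ := by
      intro σ hσ
      rw [hcomp]
      intro r
      have h1 := hx' r
      set c : ℝ := ((U r).card : ℝ) * (((U r).card : ℝ) + 1) / 2 with hc
      have h2 : ∑ τ, w τ * (∑ i ∈ U r, permVec n τ i - c) = 0 := by
        simp only [mul_sub, Finset.sum_sub_distrib, ← Finset.sum_mul, hw1, one_mul]
        rw [sub_eq_zero, ← h1]
        simp only [Finset.mul_sum, WithLp.ofLp_sum, Finset.sum_apply, PiLp.smul_apply,
          WithLp.ofLp_smul, Pi.smul_apply, smul_eq_mul]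
        exact Finset.sum_comm
      rw [Finset.sum_eq_zero_iff_of_nonneg
        (fun τ _ => mul_nonneg (hw0 τ) (sub_nonneg.2 (vert_ge τ _)))] at h2
      have h3 := (mul_eq_zero.1 (h2 σ (Finset.mem_univ _))).resolve_left hσ
      linarith
    have hs : ∑ σ, w σ • permVec n σ =
        ∑ σ ∈ Finset.univ.filter (fun σ => w σ ≠ 0), w σ • permVec n σ := by
      symm
      apply Finset.sum_filter_of_ne
      intro σ _ h h0
      exact h (by rw [h0, zero_smul])
    rw [hs]
    apply (convex_convexHull ℝ _).sum_mem (fun σ _ => hw0 σ)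
    · rw [← hw1]
      exact Finset.sum_filter_ne_zero _
    · intro σ hσ
      exact subset_convexHull ℝ _ ⟨σ, hz σ (Finset.mem_filter.1 hσ).2, rfl⟩
end

section
/- Let n ≥ 3, let k ≥ 2, and let m₁, …, m_k ≥ 1 satisfy m₁ + ⋯ + m_k = n − 1. Then there is a homeomorphism from the product X = P_{m₁} × P_{m₂} × ⋯ × P_{m_k} × Δ^k (with the subspace topology from ℝ^{m₁} × ⋯ × ℝ^{m_k} × ℝ^{k+1}) to the closed unit ball D^{n−1} ⊆ ℝ^{n−1} which maps the subset B = P_{m₁} × ⋯ × P_{m_k} × (⋃_{i=2}^{k} F_i) homeomorphically onto the closed lower hemisphere S^{n−2}₋. -/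
open scoped BigOperators

/-- The standard `k`-simplex `Δ^k ⊆ ℝ^{k+1}`. -/
def simplexSet (k : ℕ) : Set (EuclideanSpace ℝ (Fin (k + 1))) :=
  {x | (∀ i, 0 ≤ x i) ∧ ∑ i, x i = 1}

open Set Topology

lemma pb_vert {N : ℕ} (l : Fin N) :
    ∃ V : EuclideanSpace ℝ (Fin N) → EuclideanSpace ℝ (Fin N), Continuous V ∧
      BijOn V {z | ‖z‖ ≤ 1 ∧ 0 ≤ z l} {z | ‖z‖ ≤ 1} ∧
      ∀ z, ‖z‖ ≤ 1 → 0 ≤ z l → (z l = 0 ↔ (‖V z‖ = 1 ∧ V z l ≤ 0)) := by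
  classical
  set e : EuclideanSpace ℝ (Fin N) := EuclideanSpace.single l 1 with he
  have hcoord : ∀ (z : EuclideanSpace ℝ (Fin N)) (t : ℝ), (z + t • e) l = z l + t := by
    intro z t; simp [he]
  have hnorm : ∀ (z : EuclideanSpace ℝ (Fin N)) (t : ℝ),
      ‖z + t • e‖ ^ 2 = ‖z‖ ^ 2 + 2 * t * z l + t ^ 2 := by
    intro z t
    rw [norm_add_sq_real, norm_smul, real_inner_smul_right]
    have h1 : ‖e‖ = 1 := by simp [he]
    have h2 : inner ℝ z e = z l := by rw [he, EuclideanSpace.inner_single_right]; simp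
    rw [h1, h2]; simp; ring
  have hle : ∀ z : EuclideanSpace ℝ (Fin N), ‖z‖ ≤ 1 ↔ ‖z‖ ^ 2 ≤ 1 := by
    intro z; constructor
    · intro h; nlinarith [norm_nonneg z]
    · intro h; nlinarith [norm_nonneg z]
  have heq : ∀ z : EuclideanSpace ℝ (Fin N), ‖z‖ = 1 ↔ ‖z‖ ^ 2 = 1 := by
    intro z; constructor
    · intro h; rw [h]; norm_num
    · intro h; nlinarith [norm_nonneg z]
  let ρ : EuclideanSpace ℝ (Fin N) → ℝ := fun z => ‖z‖ ^ 2 - z l ^ 2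
  let q : EuclideanSpace ℝ (Fin N) → ℝ := fun z => √(1 - ρ z)
  have hρ : ∀ (z : EuclideanSpace ℝ (Fin N)) (t : ℝ), ρ (z + t • e) = ρ z := by
    intro z t; simp only [ρ]; rw [hnorm, hcoord]; ring
  have hq : ∀ (z : EuclideanSpace ℝ (Fin N)) (t : ℝ), q (z + t • e) = q z := by
    intro z t; simp only [q]; rw [hρ]
  have hq0 : ∀ z, 0 ≤ q z := fun z => Real.sqrt_nonneg _
  have hqs : ∀ z, ‖z‖ ≤ 1 → q z ^ 2 = 1 - (‖z‖ ^ 2 - z l ^ 2) := by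
    intro z hz
    refine Real.sq_sqrt ?_
    have := (hle z).1 hz
    simp only [ρ]; nlinarith [sq_nonneg (z l)]
  refine ⟨fun z => z + (z l - q z) • e, ?_, ⟨?_, ?_, ?_⟩, ?_⟩
  · simp only [q, ρ]; fun_prop
  · rintro z ⟨hz, hl⟩
    show ‖_‖ ≤ 1
    rw [hle, hnorm]
    have h1 := hqs z hz
    have h2 := (hle z).1 hz
    have h3 : z l ≤ q z := abs_le_of_sq_le_sq' (by nlinarith) (hq0 z) |>.2
    nlinarith
  · rintro z ⟨hz, hl⟩ z' ⟨hz', hl'⟩ h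
    simp only at h
    have h1 : q z = q z' := by
      rw [← hq z (z l - q z), h, hq]
    have h2 : z l + (z l - q z) = z' l + (z' l - q z') := by
      rw [← hcoord, h, hcoord]
    have h3 : z l = z' l := by linarith
    rw [h1, h3] at h
    exact add_right_cancel h
  · intro z hz
    have hz : ‖z‖ ≤ 1 := hz
    have h1 := hqs z hz
    have h2 := (hle z).1 hz
    have h3 := abs_le_of_sq_le_sq' (show z l ^ 2 ≤ q z ^ 2 by nlinarith) (hq0 z)
    refine ⟨z + ((q z - z l) / 2) • e, ⟨?_, ?_⟩, ?_⟩
    · rw [hle, hnorm]; nlinarith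
    · rw [hcoord]; linarith
    · simp only [hcoord, hq]
      rw [add_assoc, ← add_smul]
      convert add_zero z
      convert zero_smul ℝ e
      ring
  · intro z hz hl
    simp only [hcoord, heq, hnorm]
    have h1 := hqs z hz
    have h2 := (hle z).1 hz
    have h3 := hq0 z
    have h4 : z l ≤ q z := abs_le_of_sq_le_sq' (by nlinarith) (hq0 z) |>.2
    constructor
    · intro h; rw [h] at h1 ⊢; constructor <;> nlinarith
    · rintro ⟨h5, h6⟩
      have : (2 * z l - q z) ^ 2 = q z ^ 2 := by nlinarith
      have : z l * (z l - q z) = 0 := by nlinarith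
      rcases mul_eq_zero.1 this with h | h
      · exact h
      · linarith

lemma pb_half {A : Type*} [NormedAddCommGroup A] [NormedSpace ℝ A] [FiniteDimensional ℝ A]
    {N : ℕ} (l : Fin N) (hA : Module.finrank ℝ A + 1 = N) (K : Set (A × ℝ))
    (hKc : IsCompact K) (hKv : Convex ℝ K) (hK0 : K ∈ 𝓝 0) :
    ∃ G : A × ℝ → EuclideanSpace ℝ (Fin N), Continuous G ∧
      BijOn G {p | p ∈ K ∧ 0 ≤ p.2} {z | ‖z‖ ≤ 1} ∧
      ∀ p, p ∈ K → 0 ≤ p.2 → (p.2 = 0 ↔ (‖G p‖ = 1 ∧ G p l ≤ 0)) := by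
  classical
  obtain ⟨V, hVc, hVb, hVi⟩ := pb_vert l
  have hcard : Module.finrank ℝ A = Module.finrank ℝ ({j : Fin N // j ≠ l} → ℝ) := by
    simp; omega
  let T1 : A ≃ₗ[ℝ] ({j : Fin N // j ≠ l} → ℝ) := LinearEquiv.ofFinrankEq _ _ hcard
  let T0 : (A × ℝ) ≃ₗ[ℝ] EuclideanSpace ℝ (Fin N) :=
    { toFun := fun p => WithLp.toLp 2 fun i => if h : i = l then p.2 else T1 p.1 ⟨i, h⟩
      invFun := fun z => (T1.symm (fun i => z i.1), z l)
      map_add' := by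
        intro p p'; ext i; by_cases h : i = l <;> simp [h]
      map_smul' := by
        intro c p; ext i; by_cases h : i = l <;> simp [h]
      left_inv := by
        intro p
        refine Prod.ext ?_ ?_
        · apply T1.injective
          ext i
          simp [i.2]
        · simp
      right_inv := by
        intro z; ext i; by_cases h : i = l
        · subst h; simp
        · simp [h] }
  have hT0 : ∀ p, T0 p l = p.2 := by
    intro p
    simp [T0]
  let T : (A × ℝ) ≃L[ℝ] EuclideanSpace ℝ (Fin N) := T0.toContinuousLinearEquiv
  have hT : ∀ p, T p l = p.2 := hT0
  let S : Set (EuclideanSpace ℝ (Fin N)) := T '' K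
  have hSc : IsCompact S := hKc.image T.continuous
  have hSv : Convex ℝ S := hKv.linear_image T.toLinearEquiv.toLinearMap
  have hS0 : S ∈ 𝓝 0 := by
    have := T.toHomeomorph.isOpenMap.image_mem_nhds hK0
    simpa using this
  have hSb : Bornology.IsVonNBounded ℝ S := (NormedSpace.isVonNBounded_iff ℝ).2 hSc.isBounded
  let U : Set (EuclideanSpace ℝ (Fin N)) := Metric.ball 0 1
  have hUv : Convex ℝ U := convex_ball _ _
  have hU0 : U ∈ 𝓝 0 := Metric.ball_mem_nhds _ one_pos
  have hUb : Bornology.IsVonNBounded ℝ U := NormedSpace.isVonNBounded_ball _ _ _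
  let R := gaugeRescaleHomeomorph S U hSv hS0 hSb hUv hU0 hUb
  have hR : ∀ x, R x = gaugeRescale S U x := fun _ => rfl
  have hRn : ∀ x, ‖R x‖ = gauge S x := by
    intro x
    rw [← gauge_unit_ball, hR, gauge_gaugeRescale _ (absorbent_nhds_zero hU0) hUb]
  have hRm : ∀ x, ‖R x‖ ≤ 1 ↔ x ∈ S := by
    intro x
    rw [hRn, gauge_le_one_iff_mem_closure hSv hS0, hSc.isClosed.closure_eq]
  have hRl : ∀ x, ∃ c : ℝ, 0 < c ∧ R x l = c * x l := by
    intro x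
    rcases eq_or_ne x 0 with rfl | hx
    · exact ⟨1, one_pos, by simp [hR]⟩
    · exact ⟨_, div_pos ((gauge_pos (absorbent_nhds_zero hS0) hSb).2 hx)
        ((gauge_pos (absorbent_nhds_zero hU0) hUb).2 hx), by simp [hR, gaugeRescale]⟩
  have hRl0 : ∀ x, 0 ≤ R x l ↔ 0 ≤ x l := by
    intro x
    obtain ⟨c, hc, h⟩ := hRl x
    rw [h, mul_nonneg_iff_of_pos_left hc]
  have hRl1 : ∀ x, R x l = 0 ↔ x l = 0 := by
    intro x
    obtain ⟨c, hc, h⟩ := hRl x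
    rw [h, mul_eq_zero]; simp [hc.ne']
  have hTS : ∀ p, T p ∈ S ↔ p ∈ K := fun p => T.injective.mem_set_image
  refine ⟨fun p => V (R (T p)), by fun_prop, ?_, ?_⟩
  · refine hVb.comp (t := {z | ‖z‖ ≤ 1 ∧ 0 ≤ z l}) (f := fun p => R (T p)) ⟨?_, ?_, ?_⟩
    · rintro p ⟨h1, h2⟩
      exact ⟨(hRm _).2 ((hTS _).2 h1), (hRl0 _).2 (by rwa [hT])⟩
    · intro p _ p' _ h
      exact T.injective (R.injective h)
    · rintro z ⟨h1, h2⟩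
      have hz : R (T (T.symm (R.symm z))) = z := by simp
      refine ⟨T.symm (R.symm z), ⟨?_, ?_⟩, hz⟩
      · rw [← hTS, ← hRm, hz]; exact h1
      · rw [← hT, ← hRl0, hz]; exact h2
  · intro p h1 h2
    rw [← hVi _ ((hRm _).2 ((hTS _).2 h1)) ((hRl0 _).2 (by rwa [hT])), hRl1, hT]

lemma pb_perm_compact (m : ℕ) : IsCompact (permutahedron m) :=
  (Set.finite_range _).isCompact_convexHull ℝ

lemma pb_perm_sum (m : ℕ) : ∃ c : ℝ, ∀ x ∈ permutahedron m, ∑ i, x i = c := by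
  refine ⟨∑ i : Fin m, ((i : ℕ) + 1 : ℝ), fun x hx => ?_⟩
  let L : EuclideanSpace ℝ (Fin m) →ₗ[ℝ] ℝ :=
    { toFun := fun x => ∑ i, x i
      map_add' := by intro x y; simp [Finset.sum_add_distrib]
      map_smul' := by intro c x; simp [Finset.mul_sum] }
  have hc : Convex ℝ {x | L x = ∑ i : Fin m, ((i : ℕ) + 1 : ℝ)} :=
    convex_hyperplane L.isLinear _
  refine convexHull_min ?_ hc hx
  rintro _ ⟨σ, rfl⟩
  show ∑ i, (permVec m σ) i = _
  simp only [permVec]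
  exact Equiv.sum_comp σ.symm (fun i : Fin m => ((i : ℕ) + 1 : ℝ))

lemma pb_perm (m : ℕ) (hm : 1 ≤ m) :
    ∃ f : EuclideanSpace ℝ (Fin m) → (Fin (m - 1) → ℝ), Continuous f ∧
      InjOn f (permutahedron m) ∧ Convex ℝ (f '' permutahedron m) ∧
      f '' permutahedron m ∈ 𝓝 0 := by
  obtain ⟨m, rfl⟩ : ∃ j, m = j + 1 := ⟨m - 1, by omega⟩
  change ∃ f : EuclideanSpace ℝ (Fin (m + 1)) → (Fin m → ℝ), Continuous f ∧
      InjOn f (permutahedron (m + 1)) ∧ Convex ℝ (f '' permutahedron (m + 1)) ∧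
      f '' permutahedron (m + 1) ∈ 𝓝 0
  let L : EuclideanSpace ℝ (Fin (m + 1)) →ₗ[ℝ] (Fin m → ℝ) :=
    { toFun := fun x i => x i.castSucc
      map_add' := by intro x y; ext i; simp
      map_smul' := by intro c x; ext i; simp }
  have hL : ∀ x i, L x i = x i.castSucc := fun _ _ => rfl
  have hLc : Continuous L := L.continuous_of_finiteDimensional
  have himg : L '' permutahedron (m + 1) = convexHull ℝ (L '' Set.range (permVec (m + 1))) :=
    L.image_convexHull _
  have hspan : affineSpan ℝ (L '' Set.range (permVec (m + 1))) = ⊤ := by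
    have hne : (L '' Set.range (permVec (m + 1))).Nonempty :=
      (Set.range_nonempty _).image _
    rw [AffineSubspace.affineSpan_eq_top_iff_vectorSpan_eq_top_of_nonempty ℝ _ _ hne]
    rw [eq_top_iff, ← (Pi.basisFun ℝ (Fin m)).span_eq, Submodule.span_le]
    rintro _ ⟨i, rfl⟩
    have h1 : L (permVec (m + 1) (Equiv.refl _)) -ᵥ L (permVec (m + 1) (Equiv.swap i.castSucc (Fin.last m))) ∈
        vectorSpan ℝ (L '' Set.range (permVec (m + 1))) :=
      vsub_mem_vectorSpan ℝ (Set.mem_image_of_mem _ (Set.mem_range_self _))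
        (Set.mem_image_of_mem _ (Set.mem_range_self _))
    have h2 : L (permVec (m + 1) (Equiv.refl _)) -ᵥ L (permVec (m + 1) (Equiv.swap i.castSucc (Fin.last m))) =
        ((i : ℝ) - m) • (Pi.basisFun ℝ (Fin m)) i := by
      ext j
      simp only [vsub_eq_sub, Pi.sub_apply, hL, permVec, Pi.smul_apply, Pi.basisFun_apply,
        smul_eq_mul]
      by_cases h : j = i
      · subst h; simp
      · have : Equiv.swap i.castSucc (Fin.last m) j.castSucc = j.castSucc :=
          Equiv.swap_apply_of_ne_of_ne (by simpa using h) (Fin.castSucc_lt_last j).ne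
        simp [this, h]
    rw [h2] at h1
    have h3 : ((i : ℝ) - m) ≠ 0 := by
      have : (i : ℝ) < m := by exact_mod_cast i.2
      linarith
    exact (Submodule.smul_mem_iff _ h3).1 h1
  have hint := interior_convexHull_nonempty_iff_affineSpan_eq_top.2 hspan
  rw [← himg] at hint
  obtain ⟨c, hc⟩ := hint
  obtain ⟨d, hd⟩ := pb_perm_sum (m + 1)
  have hcomp : (fun x => L x - c) '' permutahedron (m + 1) =
      (Homeomorph.addRight (-c)) '' (L '' permutahedron (m + 1)) := by
    rw [Set.image_image]; simp [sub_eq_add_neg]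
  refine ⟨fun x => L x - c, by fun_prop, ?_, ?_, ?_⟩
  · intro x hx y hy h
    have h : L x = L y := by simpa using h
    have h1 := hd x hx
    have h2 := hd y hy
    rw [Fin.sum_univ_castSucc] at h1 h2
    have h3 : ∀ i : Fin m, x i.castSucc = y i.castSucc := fun i => congrFun h i
    ext i
    refine Fin.lastCases ?_ h3 i
    simp only [h3] at h1
    linarith
  · rw [hcomp]
    have : Convex ℝ (L '' permutahedron (m + 1)) := (convex_convexHull ℝ _).linear_image L
    have := this.translate (-c)
    have h2 : (Homeomorph.addRight (-c)) '' (L '' permutahedron (m + 1)) =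
        (fun x => -c + x) '' (L '' permutahedron (m + 1)) :=
      Set.image_congr fun x _ => add_comm x (-c)
    rw [h2]
    exact this
  · rw [hcomp]
    have := (Homeomorph.addRight (-c)).isOpenMap.image_mem_nhds (mem_interior_iff_mem_nhds.1 hc)
    simpa using this

lemma pb_simplex_compact (k : ℕ) : IsCompact (simplexSet k) := by
  have h := (isCompact_stdSimplex ℝ (Fin (k + 1))).image
    (PiLp.continuous_toLp 2 (fun _ : Fin (k + 1) => ℝ))
  convert h using 1
  ext x
  constructor
  · rintro ⟨h1, h2⟩
    exact ⟨x.ofLp, ⟨h1, h2⟩, rfl⟩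
  · rintro ⟨y, ⟨h1, h2⟩, rfl⟩
    exact ⟨h1, h2⟩

/-- extension of a vector by a leading zero -/
def pbExt {j : ℕ} (w : Fin j → ℝ) : Fin (j + 1) → ℝ := Fin.cons 0 w

/-- the doubled flattened simplex -/
def pbK (j : ℕ) : Set (((Fin j → ℝ) × ℝ) × ℝ) :=
  {p | ∀ i : Fin (j + 1), ((j : ℝ) + 1) * |p.2| + |p.1.2| + ∑ l, pbExt p.1.1 l
    - ((j : ℝ) + 1) * pbExt p.1.1 i ≤ 1}

lemma pbExt_cont {j : ℕ} (l : Fin (j + 1)) :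
    Continuous (fun p : ((Fin j → ℝ) × ℝ) × ℝ => pbExt p.1.1 l) := by
  refine Fin.cases ?_ (fun i => ?_) l
  · simp only [pbExt, Fin.cons_zero]; fun_prop
  · simp only [pbExt, Fin.cons_succ]; fun_prop

lemma pbExt_lin {j : ℕ} (a b : ℝ) (w w' : Fin j → ℝ) (l : Fin (j + 1)) :
    pbExt (a • w + b • w') l = a * pbExt w l + b * pbExt w' l := by
  refine Fin.cases ?_ (fun i => ?_) l
  · simp [pbExt]
  · simp [pbExt]

lemma pbK_fun_cont {j : ℕ} (i : Fin (j + 1)) :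
    Continuous (fun p : ((Fin j → ℝ) × ℝ) × ℝ => ((j : ℝ) + 1) * |p.2| + |p.1.2|
      + ∑ l, pbExt p.1.1 l - ((j : ℝ) + 1) * pbExt p.1.1 i) := by
  have := fun l : Fin (j + 1) => pbExt_cont l
  fun_prop

lemma pbK_convex (j : ℕ) : Convex ℝ (pbK j) := by
  rintro ⟨⟨w, u⟩, s⟩ hp ⟨⟨w', u'⟩, s'⟩ hq a b ha hb hab i
  have h1 := hp i
  have h2 := hq i
  simp only [Prod.smul_mk, Prod.mk_add_mk, pbExt_lin, Finset.sum_add_distrib, ← Finset.mul_sum,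
    smul_eq_mul] at h1 h2 ⊢
  have h3 : |a * s + b * s'| ≤ a * |s| + b * |s'| := by
    refine (abs_add_le _ _).trans ?_
    rw [abs_mul, abs_mul, abs_of_nonneg ha, abs_of_nonneg hb]
  have h4 : |a * u + b * u'| ≤ a * |u| + b * |u'| := by
    refine (abs_add_le _ _).trans ?_
    rw [abs_mul, abs_mul, abs_of_nonneg ha, abs_of_nonneg hb]
  have hj : (0 : ℝ) ≤ (j : ℝ) + 1 := by positivity
  have h5 := mul_le_mul_of_nonneg_left h3 hj
  have h6 := mul_le_mul_of_nonneg_left h1 ha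
  have h7 := mul_le_mul_of_nonneg_left h2 hb
  nlinarith

lemma pbK_nhds (j : ℕ) : pbK j ∈ 𝓝 0 := by
  have : ∀ᶠ p in 𝓝 (0 : ((Fin j → ℝ) × ℝ) × ℝ), ∀ i : Fin (j + 1),
      ((j : ℝ) + 1) * |p.2| + |p.1.2| + ∑ l, pbExt p.1.1 l
      - ((j : ℝ) + 1) * pbExt p.1.1 i < 1 := by
    rw [Filter.eventually_all]
    intro i
    refine (pbK_fun_cont i).continuousAt.eventually_lt_const ?_
    have h0 : ∀ l, pbExt (0 : Fin j → ℝ) l = 0 := by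
      intro l; simpa using pbExt_lin 0 0 (0 : Fin j → ℝ) 0 l
    simp [h0]
  filter_upwards [this] with p hp i using (hp i).le

lemma pbK_bound {j : ℕ} {p : ((Fin j → ℝ) × ℝ) × ℝ} (hp : p ∈ pbK j) :
    |p.2| ≤ 1 ∧ |p.1.2| ≤ 1 ∧ ∀ l, |p.1.1 l| ≤ 1 := by
  obtain ⟨i, hi⟩ := Finite.exists_min (pbExt p.1.1)
  have h := hp i
  have hsum : ∑ l, (pbExt p.1.1 l - pbExt p.1.1 i) =
      ∑ l, pbExt p.1.1 l - ((j : ℝ) + 1) * pbExt p.1.1 i := by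
    rw [Finset.sum_sub_distrib]; simp
  have hnn : ∀ l ∈ Finset.univ, 0 ≤ pbExt p.1.1 l - pbExt p.1.1 i :=
    fun l _ => sub_nonneg.2 (hi l)
  have h0 := Finset.sum_nonneg hnn
  have h1 : ∀ l, pbExt p.1.1 l - pbExt p.1.1 i ≤ ∑ l, (pbExt p.1.1 l - pbExt p.1.1 i) :=
    fun l => Finset.single_le_sum hnn (Finset.mem_univ l)
  have hj : (0 : ℝ) ≤ j := by positivity
  have ha := abs_nonneg p.2
  have hb := abs_nonneg p.1.2
  have hja := mul_nonneg hj ha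
  refine ⟨by nlinarith, by nlinarith, fun l => ?_⟩
  have h2 := h1 0
  have h3 := h1 l.succ
  have h4 := hi 0
  have h5 := hi l.succ
  have e0 : pbExt p.1.1 0 = 0 := rfl
  have e1 : pbExt p.1.1 l.succ = p.1.1 l := rfl
  rw [e0] at h2 h4
  rw [e1] at h3 h5
  rw [abs_le]
  constructor <;> nlinarith

lemma pbK_compact (j : ℕ) : IsCompact (pbK j) := by
  refine Metric.isCompact_of_isClosed_isBounded ?_ ?_
  · have : pbK j = ⋂ i : Fin (j + 1), {p | ((j : ℝ) + 1) * |p.2| + |p.1.2| + ∑ l, pbExt p.1.1 l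
      - ((j : ℝ) + 1) * pbExt p.1.1 i ≤ 1} := by
      ext p; simp [pbK]
    rw [this]
    exact isClosed_iInter fun i => isClosed_le (pbK_fun_cont i) continuous_const
  · refine (isBounded_iff_forall_norm_le).2 ⟨1, fun p hp => ?_⟩
    obtain ⟨h1, h2, h3⟩ := pbK_bound hp
    refine max_le (max_le ?_ h2) h1
    exact (pi_norm_le_iff_of_nonneg zero_le_one).2 h3

lemma pb_simplex (k : ℕ) (hk : 2 ≤ k) :
    ∃ (g : EuclideanSpace ℝ (Fin (k + 1)) → ((Fin (k - 2) → ℝ) × ℝ) × ℝ)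
      (K : Set (((Fin (k - 2) → ℝ) × ℝ) × ℝ)), Continuous g ∧
      BijOn g (simplexSet k) {p | p ∈ K ∧ 0 ≤ p.2} ∧ IsCompact K ∧ Convex ℝ K ∧ K ∈ 𝓝 0 ∧
      ∀ x ∈ simplexSet k, ((∃ i : Fin (k + 1), 1 ≤ (i : ℕ) ∧ (i : ℕ) ≤ k - 1 ∧ x i = 0) ↔
        (g x).2 = 0) := by
  obtain ⟨j, rfl⟩ : ∃ j, k = j + 2 := ⟨k - 2, by omega⟩
  change ∃ (g : EuclideanSpace ℝ (Fin (j + 2 + 1)) → ((Fin j → ℝ) × ℝ) × ℝ)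
      (K : Set (((Fin j → ℝ) × ℝ) × ℝ)), _
  let mid : Fin (j + 1) → Fin (j + 2 + 1) := fun i => i.succ.castSucc
  let s : EuclideanSpace ℝ (Fin (j + 2 + 1)) → ℝ := fun x =>
    Finset.univ.inf' Finset.univ_nonempty fun i : Fin (j + 1) => x (mid i)
  have hs1 : ∀ x i, s x ≤ x (mid i) := fun x i => Finset.inf'_le _ (Finset.mem_univ i)
  have hs2 : ∀ x, ∃ i, s x = x (mid i) := by
    intro x
    obtain ⟨i, -, h⟩ := Finset.exists_mem_eq_inf' (Finset.univ_nonempty (α := Fin (j + 1)))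
      (fun i : Fin (j + 1) => x (mid i))
    exact ⟨i, h⟩
  have hsc : Continuous s :=
    Continuous.finset_inf'_apply _ (fun i _ => by fun_prop)
  have hsum : ∀ x : EuclideanSpace ℝ (Fin (j + 2 + 1)),
      ∑ i, x i = x 0 + ∑ i, x (mid i) + x (Fin.last _) := by
    intro x
    rw [Fin.sum_univ_castSucc, Fin.sum_univ_succ]
    rfl
  let g : EuclideanSpace ℝ (Fin (j + 2 + 1)) → ((Fin j → ℝ) × ℝ) × ℝ := fun x =>
    ((fun i => x (mid i.succ) - x (mid 0), x 0 - x (Fin.last _)), s x)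
  have hext : ∀ x l, pbExt (g x).1.1 l = x (mid l) - x (mid 0) := by
    intro x l
    refine Fin.cases ?_ (fun i => ?_) l
    · simp [pbExt]
    · simp [pbExt, g]
  have hj : (0 : ℝ) ≤ (j : ℝ) + 1 := by positivity
  refine ⟨g, pbK j, ?_, ⟨?_, ?_, ?_⟩, pbK_compact j, pbK_convex j, pbK_nhds j, ?_⟩
  · fun_prop
  · rintro x ⟨h0, h1⟩
    have hsn : 0 ≤ s x := by
      obtain ⟨i, hi⟩ := hs2 x
      rw [hi]; exact h0 _
    refine ⟨fun i => ?_, hsn⟩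
    simp only [hext, Finset.sum_sub_distrib]
    rw [hsum] at h1
    have h3 := mul_le_mul_of_nonneg_left (hs1 x i) hj
    have h4 : |x 0 - x (Fin.last _)| ≤ x 0 + x (Fin.last _) := by
      rw [abs_le]
      constructor <;> linarith [h0 0, h0 (Fin.last _)]
    simp only [g, abs_of_nonneg hsn, Finset.sum_const, Finset.card_univ, Fintype.card_fin,
      nsmul_eq_mul, Nat.cast_add, Nat.cast_one]
    linarith
  · rintro x ⟨hx0, hx1⟩ y ⟨hy0, hy1⟩ h
    have hs : s x = s y := congrArg Prod.snd h
    have hu : x 0 - x (Fin.last _) = y 0 - y (Fin.last _) := congrArg (fun p => p.1.2) h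
    have hw : ∀ l, x (mid l) - x (mid 0) = y (mid l) - y (mid 0) := by
      intro l; rw [← hext, h, hext]
    have hmid0 : x (mid 0) = y (mid 0) := by
      obtain ⟨a, ha⟩ := hs2 x
      obtain ⟨b, hb⟩ := hs2 y
      have h1 := hs1 x b
      have h2 := hs1 y a
      have h3 := hw a
      have h4 := hw b
      linarith
    have hmid : ∀ l, x (mid l) = y (mid l) := by
      intro l; have := hw l; linarith
    rw [hsum] at hx1 hy1
    simp only [hmid] at hx1
    ext i
    refine Fin.lastCases ?_ (fun i => ?_) i
    · linarith
    · refine Fin.cases ?_ (fun i => ?_) i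
      · show x 0 = y 0
        linarith
      · exact hmid i
  · rintro ⟨⟨(w : Fin j → ℝ), u⟩, t⟩ ⟨hK, ht⟩
    have ht : 0 ≤ t := ht
    obtain ⟨i, hi⟩ := Finite.exists_min (pbExt w)
    have h := hK i
    let y : Fin (j + 1) → ℝ := fun l => t + (pbExt w l - pbExt w i)
    let S : ℝ := ∑ l, y l
    have hS : S = ((j : ℝ) + 1) * t + ∑ l, pbExt w l - ((j : ℝ) + 1) * pbExt w i := by
      simp only [S, y, Finset.sum_add_distrib, Finset.sum_sub_distrib]
      simp
      ring
    simp only [abs_of_nonneg ht] at h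
    have hu : |u| ≤ 1 - S := by linarith
    obtain ⟨hu1, hu2⟩ := abs_le.1 hu
    let z : Fin (j + 2 + 1) → ℝ := Fin.snoc (α := fun _ => ℝ)
      (Fin.cons (α := fun _ => ℝ) ((1 - S + u) / 2) y) ((1 - S - u) / 2)
    let x : EuclideanSpace ℝ (Fin (j + 2 + 1)) := WithLp.toLp 2 z
    have x0 : x 0 = (1 - S + u) / 2 := by
      show z 0 = _
      rw [← Fin.castSucc_zero]
      simp only [z, Fin.snoc_castSucc, Fin.cons_zero]
    have xl : x (Fin.last _) = (1 - S - u) / 2 := by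
      show z (Fin.last _) = _
      simp only [z, Fin.snoc_last]
    have xm : ∀ l, x (mid l) = y l := by
      intro l
      show z (mid l) = _
      simp only [z, mid, Fin.snoc_castSucc, Fin.cons_succ]
    have hyn : ∀ l, t ≤ y l := fun l => by have := hi l; simp only [y]; linarith
    refine ⟨x, ⟨fun r => ?_, ?_⟩, ?_⟩
    · refine Fin.lastCases ?_ (fun r => ?_) r
      · rw [xl]; linarith
      · refine Fin.cases ?_ (fun r => ?_) r
        · show 0 ≤ x 0
          rw [x0]; linarith
        · show 0 ≤ x (mid r)
          rw [xm]; exact ht.trans (hyn r)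
    · rw [hsum, x0, xl]
      simp only [xm]
      simp only [S]; ring
    · have hst : s x = t := by
        apply le_antisymm
        · refine (hs1 x i).trans ?_
          rw [xm]; simp [y]
        · obtain ⟨a, ha⟩ := hs2 x
          rw [ha, xm]; exact hyn a
      refine Prod.ext (Prod.ext ?_ ?_) hst
      · funext l
        show x (mid l.succ) - x (mid 0) = w l
        rw [xm, xm]
        simp [y, pbExt]
      · show x 0 - x (Fin.last _) = u
        rw [x0, xl]; ring
  · rintro x ⟨h0, h1⟩
    show _ ↔ s x = 0
    constructor
    · rintro ⟨i, hi1, hi2, hi⟩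
      have : mid ⟨i - 1, by omega⟩ = i := by
        ext; simp [mid]; omega
      obtain ⟨a, ha⟩ := hs2 x
      have h3 := hs1 x ⟨i - 1, by omega⟩
      rw [this, hi] at h3
      have := h0 (mid a)
      linarith
    · intro h
      obtain ⟨a, ha⟩ := hs2 x
      refine ⟨mid a, ?_, ?_, ?_⟩
      · simp [mid]
      · simp [mid]; omega
      · rw [← ha, h]

/-- For `n ≥ 3`, `k ≥ 2` and `m₁ + ⋯ + m_k = n − 1` (`m_r ≥ 1`), the product
`X = P_{m₁} × ⋯ × P_{m_k} × Δ^k` is homeomorphic to the closed unit ball `D^{n−1}` by a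
homeomorphism carrying `B = P_{m₁} × ⋯ × P_{m_k} × (F_2 ∪ ⋯ ∪ F_k)` (the facets `F_i` of
`Δ^k` being numbered `1, …, k+1`) exactly onto the closed lower hemisphere `S^{n−2}₋`. -/
theorem product_homeo_ball (n k : ℕ) (hn : 3 ≤ n) (hk : 2 ≤ k) (m : Fin k → ℕ)
    (hm : ∀ r, 1 ≤ m r) (hsum : ∑ r, m r = n - 1) :
    ∃ φ : {p : ((r : Fin k) → EuclideanSpace ℝ (Fin (m r))) ×
              EuclideanSpace ℝ (Fin (k + 1)) //
            (∀ r, p.1 r ∈ permutahedron (m r)) ∧ p.2 ∈ simplexSet k} ≃ₜ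
          {y : EuclideanSpace ℝ (Fin (n - 1)) // ‖y‖ ≤ 1},
      ∀ p, ((∃ i : Fin (k + 1), 1 ≤ (i : ℕ) ∧ (i : ℕ) ≤ k - 1 ∧ p.val.2 i = 0) ↔
        (‖(φ p).val‖ = 1 ∧ (φ p).val ⟨n - 2, by omega⟩ ≤ 0)) := by
  classical
  choose f hfc hfi hfv hf0 using fun r => pb_perm (m r) (hm r)
  obtain ⟨g, K, hgc, hgb, hKc, hKv, hK0, hgz⟩ := pb_simplex k hk
  let Q : (r : Fin k) → Set (Fin (m r - 1) → ℝ) := fun r => f r '' permutahedron (m r)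
  have hQc : ∀ r, IsCompact (Q r) := fun r => (pb_perm_compact (m r)).image (hfc r)
  let A := ((r : Fin k) → (Fin (m r - 1) → ℝ)) × ((Fin (k - 2) → ℝ) × ℝ)
  let KK : Set (A × ℝ) := {p | (∀ r, p.1.1 r ∈ Q r) ∧ (p.1.2, p.2) ∈ K}
  let e : (((r : Fin k) → (Fin (m r - 1) → ℝ)) × (((Fin (k - 2) → ℝ) × ℝ) × ℝ)) ≃ₜ (A × ℝ) :=
    (Homeomorph.prodAssoc _ _ _).symm
  have hKK : KK = e '' ((Set.univ.pi Q) ×ˢ K) := by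
    rw [e.image_eq_preimage_symm]
    ext p
    simp [KK, e, Set.mem_pi]
    rfl
  have hKKc : IsCompact KK := by
    rw [hKK]
    exact ((isCompact_univ_pi hQc).prod hKc).image e.continuous
  have hKKv : Convex ℝ KK := by
    rintro p ⟨hp1, hp2⟩ q ⟨hq1, hq2⟩ a b ha hb hab
    exact ⟨fun r => hfv r (hp1 r) (hq1 r) ha hb hab, hKv hp2 hq2 ha hb hab⟩
  have hKK0 : KK ∈ 𝓝 0 := by
    rw [hKK]
    have h1 : (Set.univ.pi Q) ×ˢ K ∈ 𝓝 (0 : ((r : Fin k) → (Fin (m r - 1) → ℝ)) ×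
        (((Fin (k - 2) → ℝ) × ℝ) × ℝ)) :=
      prod_mem_nhds (set_pi_mem_nhds Set.finite_univ fun r _ => hf0 r) hK0
    exact e.isOpenMap.image_mem_nhds h1
  have hsub : ∑ r, (m r - 1) + k = n - 1 := by
    rw [← hsum]
    have : ∀ r, m r = (m r - 1) + 1 := fun r => by have := hm r; omega
    conv_rhs => rw [Finset.sum_congr rfl fun r _ => this r]
    rw [Finset.sum_add_distrib]; simp
  have hA : Module.finrank ℝ A + 1 = n - 1 := by
    have : Module.finrank ℝ A = ∑ r, (m r - 1) + ((k - 2) + 1) := by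
      simp [A, Module.finrank_prod, Module.finrank_pi_fintype]
    omega
  obtain ⟨G, hGc, hGb, hGz⟩ := pb_half (A := A) (⟨n - 2, by omega⟩ : Fin (n - 1)) hA KK hKKc hKKv hKK0
  let X : Set (((r : Fin k) → EuclideanSpace ℝ (Fin (m r))) × EuclideanSpace ℝ (Fin (k + 1))) :=
    {p | (∀ r, p.1 r ∈ permutahedron (m r)) ∧ p.2 ∈ simplexSet k}
  have hXc : IsCompact X := by
    have : X = (Set.univ.pi fun r => permutahedron (m r)) ×ˢ simplexSet k := by
      ext p; simp [X, Set.mem_pi]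
    rw [this]
    exact (isCompact_univ_pi fun r => pb_perm_compact (m r)).prod (pb_simplex_compact k)
  let F : ((r : Fin k) → EuclideanSpace ℝ (Fin (m r))) × EuclideanSpace ℝ (Fin (k + 1)) → A × ℝ :=
    fun p => ((fun r => f r (p.1 r), (g p.2).1), (g p.2).2)
  have hFc : Continuous F := by fun_prop
  have hFb : BijOn F X {p | p ∈ KK ∧ 0 ≤ p.2} := by
    refine ⟨?_, ?_, ?_⟩
    · rintro p ⟨h1, h2⟩
      have := hgb.mapsTo h2
      exact ⟨⟨fun r => Set.mem_image_of_mem _ (h1 r), this.1⟩, this.2⟩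
    · rintro p ⟨h1, h2⟩ p' ⟨h1', h2'⟩ h
      have e1 : ∀ r, f r (p.1 r) = f r (p'.1 r) := fun r => congrFun (congrArg (fun q => q.1.1) h) r
      have e2 : g p.2 = g p'.2 :=
        Prod.ext (congrArg (fun q => q.1.2) h) (congrArg (fun q => q.2) h)
      exact Prod.ext (funext fun r => hfi r (h1 r) (h1' r) (e1 r)) (hgb.injOn h2 h2' e2)
    · rintro ⟨⟨a, b⟩, c⟩ ⟨⟨h1, h2⟩, h3⟩
      choose y hy hya using h1
      obtain ⟨x, hx, hxe⟩ := hgb.surjOn (show (b, c) ∈ {p | p ∈ K ∧ 0 ≤ p.2} from ⟨h2, h3⟩)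
      refine ⟨(y, x), ⟨hy, hx⟩, ?_⟩
      simp only [F, hxe]
      congr 2
      funext r; exact hya r
  have hB := hGb.comp hFb
  have : CompactSpace X := isCompact_iff_compactSpace.1 hXc
  let E : X ≃ {y : EuclideanSpace ℝ (Fin (n - 1)) | ‖y‖ ≤ 1} := hB.equiv
  have hE : ∀ p, (E p : EuclideanSpace ℝ (Fin (n - 1))) = G (F p) := fun _ => rfl
  have hEc : Continuous E := by
    refine Continuous.subtype_mk ?_ _
    exact (hGc.comp hFc).comp continuous_subtype_val
  refine ⟨hEc.homeoOfEquivCompactToT2, fun p => ?_⟩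
  have hp := hFb.mapsTo p.2
  rw [hgz _ p.2.2]
  exact hGz (F p) hp.1 hp.2
end

section
/- Let n ≥ 3, let k ≥ 2, and let m₁, …, m_k ≥ 1 satisfy m₁ + ⋯ + m_k = n − 1. Let X = P_{m₁} × P_{m₂} × ⋯ × P_{m_k} × Δ^k ⊆ ℝ^{m₁} × ⋯ × ℝ^{m_k} × ℝ^{k+1}, let ∂X denote the intrinsic frontier of X (the frontier of X taken within its affine span), and let B = P_{m₁} × ⋯ × P_{m_k} × (⋃_{i=2}^{k} F_i). Then the closure of ∂X \ B (equivalently, ∂X minus the relative interior of B within ∂X) is a strong deformation retract of X. -/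
open scoped BigOperators

/-- `A` is a strong deformation retract of `X`: there is a continuous map
`H : X × [0,1] → X` with `H(x,0) = x`, `H(x,1) ∈ A`, and `H(a,t) = a` for `a ∈ A`. -/
def IsStrongDeformationRetract {E : Type*} [TopologicalSpace E] (X A : Set E) : Prop :=
  A ⊆ X ∧ ∃ H : E × ℝ → E,
    ContinuousOn H (X ×ˢ Set.Icc (0 : ℝ) 1) ∧
    (∀ x ∈ X, ∀ t ∈ Set.Icc (0 : ℝ) 1, H (x, t) ∈ X) ∧
    (∀ x ∈ X, H (x, 0) = x) ∧
    (∀ x ∈ X, H (x, 1) ∈ A) ∧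
    (∀ a ∈ A, ∀ t ∈ Set.Icc (0 : ℝ) 1, H (a, t) = a)

section aux

lemma exists_gauge_aux {E : Type*} [NormedAddCommGroup E] [NormedSpace ℝ E] [FiniteDimensional ℝ E]
    (P : Set E) (hc : IsClosed P) (hP : Convex ℝ P) (hne : P.Nonempty) :
    ∃ c ∈ P, ∃ g : E → ℝ, Continuous g ∧ (∀ s : ℝ, 0 ≤ s → ∀ v, g (s • v) = s * g v) ∧
      ∀ u ∈ affineSpan ℝ P, (u ∈ P ↔ g (u - c) ≤ 1) := by
  obtain ⟨c, hcI⟩ := hne.intrinsicInterior hP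
  have hcP : c ∈ P := intrinsicInterior_subset hcI
  obtain ⟨y, hy, rfl⟩ := mem_intrinsicInterior.1 hcI
  set D := (affineSpan ℝ P).direction with hD
  let φ : D → affineSpan ℝ P := fun v => ⟨(v : E) + (y : E), by
    simpa using AffineSubspace.vadd_mem_of_mem_direction v.2 y.2⟩
  have hφ : Continuous φ := by
    apply Continuous.subtype_mk; fun_prop
  let S : Set D := {v | (v : E) + (y : E) ∈ P}
  have hS0 : S ∈ nhds (0 : D) := by
    have h0 : φ 0 = y := by ext; simp [φ]
    have : φ ⁻¹' (interior (Subtype.val ⁻¹' P)) ∈ nhds (0 : D) := by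
      apply hφ.continuousAt.preimage_mem_nhds
      rw [h0]; exact isOpen_interior.mem_nhds hy
    filter_upwards [this] with v hv
    exact (interior_subset hv : _)
  have hSc : Convex ℝ S := by
    intro a ha b hb s t hs ht hst
    have := hP ha hb hs ht hst
    simp only [S, Set.mem_setOf_eq]
    convert this using 1
    have : (y : E) = (s + t) • (y : E) := by rw [hst, one_smul]
    conv_lhs => rw [this]
    push_cast
    module
  have hScl : IsClosed S := hc.preimage (by fun_prop : Continuous fun v : D => (v : E) + (y : E))
  obtain ⟨π, hπ⟩ := LinearMap.exists_leftInverse_of_injective D.subtype (by simp)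
  have hπ' : ∀ v : D, π (v : E) = v := fun v => by
    have := LinearMap.congr_fun hπ v
    simpa using this
  refine ⟨y, hcP, fun v => gauge S (π v), ?_, ?_, ?_⟩
  · exact (continuous_gauge hSc hS0).comp (LinearMap.continuous_of_finiteDimensional π)
  · intro s hs v
    simp only [map_smul]
    rw [gauge_smul_of_nonneg hs]; rfl
  · intro u hu
    have hv : u - y ∈ D := AffineSubspace.vsub_mem_direction hu y.2
    have := gauge_le_one_iff_mem_closure hSc hS0 (x := ⟨u - y, hv⟩)
    rw [hScl.closure_eq] at this
    show u ∈ P ↔ gauge S (π (u - y)) ≤ 1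
    rw [show π (u - y) = ⟨u - y, hv⟩ from hπ' ⟨u - y, hv⟩, this]
    simp [S]

lemma ii_push {F : Type*} [NormedAddCommGroup F] [NormedSpace ℝ F] {X : Set F} {p q : F}
    (hp : p ∈ intrinsicInterior ℝ X) (hq : q ∈ X) : ∃ ε : ℝ, 0 < ε ∧ p + ε • (p - q) ∈ X := by
  obtain ⟨y, hy, rfl⟩ := mem_intrinsicInterior.1 hp
  let φ : ℝ → affineSpan ℝ X := fun t => ⟨(y : F) + t • ((y : F) - q), by
    have := AffineSubspace.vadd_mem_of_mem_direction
      (Submodule.smul_mem _ t (AffineSubspace.vsub_mem_direction y.2 (subset_affineSpan ℝ X hq))) y.2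
    simpa [add_comm] using this⟩
  have hφ : Continuous φ := by
    apply Continuous.subtype_mk; fun_prop
  have h0 : φ 0 = y := by ext; simp [φ]
  have : φ ⁻¹' (interior (Subtype.val ⁻¹' X)) ∈ nhds (0 : ℝ) := by
    apply hφ.continuousAt.preimage_mem_nhds
    rw [h0]; exact isOpen_interior.mem_nhds hy
  have hself : Set.Ioi (0 : ℝ) ∈ nhdsWithin (0 : ℝ) (Set.Ioi 0) := self_mem_nhdsWithin
  obtain ⟨ε, hε, h⟩ := Filter.nonempty_of_mem
    (Filter.inter_mem hself (mem_nhdsWithin_of_mem_nhds this))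
  exact ⟨ε, hε, (interior_subset h : _)⟩

lemma ii_of_open {F : Type*} [NormedAddCommGroup F] [NormedSpace ℝ F] {X U : Set F} {p : F}
    (hp : p ∈ X) (hU : IsOpen U) (hpU : p ∈ U) (h : ∀ x ∈ U, x ∈ affineSpan ℝ X → x ∈ X) :
    p ∈ intrinsicInterior ℝ X := by
  refine mem_intrinsicInterior.2 ⟨⟨p, subset_affineSpan ℝ X hp⟩, ?_, rfl⟩
  rw [mem_interior]
  exact ⟨Subtype.val ⁻¹' U, fun x hx => h x hx x.2, hU.preimage continuous_subtype_val, hpU⟩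

lemma frontier_iff_aux {F : Type*} [NormedAddCommGroup F] [NormedSpace ℝ F] {X : Set F}
    (hX : IsClosed X) (p : F) :
    p ∈ intrinsicFrontier ℝ X ↔ p ∈ X ∧ p ∉ intrinsicInterior ℝ X := by
  rw [← intrinsicClosure_sdiff_intrinsicInterior,
    (hX.preimage continuous_subtype_val).intrinsicClosure]
  rfl

lemma simplexSet_closed (k : ℕ) : IsClosed (simplexSet k) := by
  have : simplexSet k = (⋂ i, {x | 0 ≤ x i}) ∩ {x | ∑ i, x i = 1} := by
    ext; simp [simplexSet]
  rw [this]
  refine (isClosed_iInter fun i => isClosed_le continuous_const (by fun_prop)).inter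
    (isClosed_eq (by fun_prop) continuous_const)

lemma simplexSet_convex (k : ℕ) : Convex ℝ (simplexSet k) := by
  intro a ha b hb s t hs ht hst
  refine ⟨fun i => ?_, ?_⟩
  · have := ha.1 i
    have := hb.1 i
    simp only [PiLp.add_apply, PiLp.smul_apply, smul_eq_mul]
    positivity
  · simp only [PiLp.add_apply, PiLp.smul_apply, smul_eq_mul, Finset.sum_add_distrib,
      ← Finset.mul_sum, ha.2, hb.2, mul_one, hst]

lemma main_aux {E : Type*} [NormedAddCommGroup E] [NormedSpace ℝ E] [FiniteDimensional ℝ E]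
    (P : Set E) (hc : IsClosed P) (hP : Convex ℝ P) (hne : P.Nonempty) (k : ℕ) (hk : 2 ≤ k)
    (X B : Set (E × EuclideanSpace ℝ (Fin (k + 1))))
    (hX : X = {p | p.1 ∈ P ∧ p.2 ∈ simplexSet k})
    (hB : B = {p | p.1 ∈ P ∧ p.2 ∈ simplexSet k ∧
      ∃ i : Fin (k + 1), 1 ≤ (i : ℕ) ∧ (i : ℕ) ≤ k - 1 ∧ p.2 i = 0}) :
    IsStrongDeformationRetract X (closure (intrinsicFrontier ℝ X \ B)) := by
  obtain ⟨c, hcP, g, hg, hgs, hgP⟩ := exists_gauge_aux P hc hP hne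
  have hg0 : g 0 = 0 := by simpa using hgs 0 le_rfl 0
  have hkR : (2 : ℝ) ≤ k := by exact_mod_cast hk
  have hk0 : (0 : ℝ) < k := by linarith
  have hXcl : IsClosed X := by
    have : X = P ×ˢ simplexSet k := by rw [hX]; rfl
    rw [this]; exact hc.prod (simplexSet_closed k)
  have hXcv : Convex ℝ X := by
    have : X = P ×ˢ simplexSet k := by rw [hX]; rfl
    rw [this]; exact hP.prod (simplexSet_convex k)
  have hspan : ∀ p ∈ affineSpan ℝ X, p.1 ∈ affineSpan ℝ P ∧ ∑ i, p.2 i = 1 := by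
    intro p hp
    constructor
    · have : affineSpan ℝ X ≤ (affineSpan ℝ P).comap
          (LinearMap.fst ℝ E (EuclideanSpace ℝ (Fin (k + 1)))).toAffineMap := by
        rw [affineSpan_le]
        intro x hx
        rw [hX] at hx
        exact subset_affineSpan ℝ P hx.1
      exact this hp
    · let L : E × EuclideanSpace ℝ (Fin (k + 1)) →ₗ[ℝ] ℝ :=
        ∑ i, (EuclideanSpace.projₗ i) ∘ₗ (LinearMap.snd ℝ E (EuclideanSpace ℝ (Fin (k + 1))))
      have hL : ∀ x, L x = ∑ i, x.2 i := fun x => by simp [L]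
      have : affineSpan ℝ X ≤ (affineSpan ℝ {(1 : ℝ)}).comap L.toAffineMap := by
        rw [affineSpan_le]
        intro x hx
        rw [hX] at hx
        have : L x = 1 := by rw [hL]; exact hx.2.2
        simpa using this
      have h2 := this hp
      rw [← hL]
      simpa using h2
  let l : Fin (k + 1) := Fin.last k
  have hl0 : l ≠ 0 := by
    intro h; have := congrArg Fin.val h; simp [l] at this; omega
  let M : E × EuclideanSpace ℝ (Fin (k + 1)) → ℝ := fun p =>
    max (g (p.1 - c)) (max (1 - p.2 0 * (2 / k)) (1 - p.2 l * (2 / k)))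
  have hM : Continuous M := by
    have h1 : Continuous fun p : E × EuclideanSpace ℝ (Fin (k + 1)) => g (p.1 - c) :=
      hg.comp (by fun_prop)
    exact h1.max (by fun_prop)
  have h2k : (0 : ℝ) < 2 / k := by positivity
  have hM1 : ∀ p ∈ X, M p ≤ 1 := by
    intro p hp
    rw [hX] at hp
    have a0 := mul_nonneg (hp.2.1 0) h2k.le
    have a1 := mul_nonneg (hp.2.1 l) h2k.le
    refine max_le ((hgP _ (subset_affineSpan ℝ P hp.1)).1 hp.1) (max_le ?_ ?_) <;> linarith
  have hM0 : ∀ p ∈ X, 0 < M p := by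
    intro p hp
    rw [hX] at hp
    by_contra hcon
    have h := not_lt.1 hcon
    have h1 := (le_max_right _ _).trans h
    have h2 := (le_max_left _ _).trans h1
    have h3 := (le_max_right _ _).trans h1
    have hs : p.2 0 + p.2 l ≤ 1 := by
      rw [← hp.2.2, ← Finset.sum_pair hl0.symm]
      exact Finset.sum_le_sum_of_subset_of_nonneg (Finset.subset_univ _) fun i _ _ => hp.2.1 i
    have h4 : (p.2 0 + p.2 l) * (2 / k) ≤ 1 * (2 / k) := by gcongr
    have h5 : (2 : ℝ) / k ≤ 1 := by rw [div_le_one hk0]; exact hkR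
    linarith
  -- mid/interior description
  have hint : ∀ p ∈ X, M p < 1 → (∀ i : Fin (k + 1), 1 ≤ (i : ℕ) → (i : ℕ) ≤ k - 1 → p.2 i ≠ 0) →
      p ∈ intrinsicInterior ℝ X := by
    intro p hp hMp hi
    have hp' := hp
    rw [hX] at hp'
    apply ii_of_open (U := {p | g (p.1 - c) < 1} ∩ ⋂ i, {p | 0 < p.2 i}) hp
    · refine (isOpen_lt (hg.comp (by fun_prop)) continuous_const).inter
        (isOpen_iInter_of_finite fun i => isOpen_lt continuous_const (by fun_prop))
    · refine ⟨(le_max_left _ _).trans_lt hMp, ?_⟩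
      have h1 := (le_max_right _ _).trans_lt hMp
      have h2 := (le_max_left _ _).trans_lt h1
      have h3 := (le_max_right _ _).trans_lt h1
      simp only [Set.mem_iInter, Set.mem_setOf_eq]
      intro i
      refine lt_of_le_of_ne (hp'.2.1 i) (Ne.symm ?_)
      by_cases hi0 : i = 0
      · subst hi0; intro h; rw [h] at h2; simp at h2
      by_cases hil : i = l
      · subst hil; intro h; rw [h] at h3; simp at h3
      apply hi
      · have : (i : ℕ) ≠ 0 := fun h => hi0 (Fin.ext h)
        omega
      · have : (i : ℕ) ≠ k := fun h => hil (Fin.ext h)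
        have := i.2
        omega
    · rintro x ⟨hx1, hx2⟩ hxs
      simp only [Set.mem_iInter, Set.mem_setOf_eq] at hx1 hx2
      obtain ⟨hs1, hs2⟩ := hspan x hxs
      rw [hX]
      exact ⟨(hgP _ hs1).2 hx1.le, fun i => (hx2 i).le, hs2⟩
  -- barycenter
  let b : EuclideanSpace ℝ (Fin (k + 1)) := WithLp.toLp 2 fun _ => 1 / ((k : ℝ) + 1)
  have hbpos : ∀ i, 0 < b i := fun i => by simp only [b]; positivity
  have hb : b ∈ simplexSet k := by
    refine ⟨fun i => (hbpos i).le, ?_⟩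
    simp [b]; field_simp
  have hfr : ∀ p ∈ X, (g (p.1 - c) = 1 ∨ p.2 0 = 0 ∨ p.2 l = 0) → p ∈ intrinsicFrontier ℝ X := by
    intro p hp h
    rw [frontier_iff_aux hXcl]
    refine ⟨hp, fun hpi => ?_⟩
    obtain ⟨ε, hε, h'⟩ := ii_push hpi (q := (c, b)) (by rw [hX]; exact ⟨hcP, hb⟩)
    rw [hX] at h'
    have hz : ∀ i, p.2 i = 0 → False := by
      intro i hi
      have := h'.2.1 i
      simp [hi] at this
      nlinarith [hbpos i]
    rcases h with h | h | h
    · have h1 := (hgP _ (subset_affineSpan ℝ P h'.1)).1 h'.1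
      have : (p + ε • (p - (c, b))).1 - c = (1 + ε) • (p.1 - c) := by
        simp; module
      rw [this, hgs _ (by linarith), h] at h1
      linarith
    · exact hz _ h
    · exact hz _ h
  have hCiff : ∀ p ∈ X, M p = 1 → (g (p.1 - c) = 1 ∨ p.2 0 = 0 ∨ p.2 l = 0) := by
    intro p hp h
    rcases max_choice (g (p.1 - c)) (max (1 - p.2 0 * (2 / k)) (1 - p.2 l * (2 / k))) with h1 | h1
    · left; rw [← h]; exact h1.symm
    · right
      have h1' : M p = _ := h1
      rcases max_choice (1 - p.2 0 * (2 / k)) (1 - p.2 l * (2 / k)) with h2 | h2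
      · left; rw [h2, h] at h1'
        have : p.2 0 * (2 / k) = 0 := by linarith
        simpa [h2k.ne', hk0.ne'] using this
      · right; rw [h2, h] at h1'
        have : p.2 l * (2 / k) = 0 := by linarith
        simpa [h2k.ne', hk0.ne'] using this
  -- face barycenters
  let z : Fin (k + 1) → EuclideanSpace ℝ (Fin (k + 1)) := fun j =>
    WithLp.toLp 2 fun i => (1 - if i = j then 1 else 0) / (k : ℝ)
  have hzs : ∀ j, z j ∈ simplexSet k := by
    intro j
    refine ⟨fun i => ?_, ?_⟩
    · simp only [z]; split_ifs <;> simp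
    · simp only [z]
      rw [← Finset.sum_div, Finset.sum_sub_distrib]
      simp [hk0.ne']
  have hzj : ∀ j, z j j = 0 := fun j => by simp [z]
  have hzi : ∀ j i, i ≠ j → 0 < z j i := fun j i hij => by simp [z, hij, hk0]
  have happ : ∀ p ∈ X, ∀ w ∈ simplexSet k,
      (∀ i : Fin (k + 1), 1 ≤ (i : ℕ) → (i : ℕ) ≤ k - 1 → 0 < w i) →
      (g (p.1 - c) = 1 ∨ (p.2 0 = 0 ∧ w 0 = 0) ∨ (p.2 l = 0 ∧ w l = 0)) →
      p ∈ closure (intrinsicFrontier ℝ X \ B) := by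
    intro p hp w hw hwi h
    have hp' := hp
    rw [hX] at hp'
    let f : ℝ → E × EuclideanSpace ℝ (Fin (k + 1)) := fun t => (p.1, (1 - t) • p.2 + t • w)
    have hf : Continuous f := by fun_prop
    have hf0 : f 0 = p := by simp [f]
    have htend : Filter.Tendsto f (nhdsWithin 0 (Set.Ioi 0)) (nhds p) := by
      rw [← hf0]; exact hf.continuousAt.tendsto.mono_left nhdsWithin_le_nhds
    refine mem_closure_of_tendsto htend ?_
    have hI : Set.Ioo (0 : ℝ) 1 ∈ nhdsWithin (0 : ℝ) (Set.Ioi 0) := Ioo_mem_nhdsGT one_pos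
    filter_upwards [hI] with t ht
    have ht1 : 0 ≤ 1 - t := by linarith [ht.2]
    refine ⟨hfr _ ?_ ?_, ?_⟩
    · rw [hX]
      exact ⟨hp'.1, simplexSet_convex k hp'.2 hw ht1 ht.1.le (by ring)⟩
    · rcases h with h | ⟨h, h'⟩ | ⟨h, h'⟩
      · left; exact h
      · right; left; simp [f, h, h']
      · right; right; simp [f, h, h']
    · rw [hB]
      rintro ⟨-, -, i, hi1, hi2, hi3⟩
      simp [f] at hi3
      have a1 := mul_nonneg ht1 (hp'.2.1 i)
      have a2 := mul_pos ht.1 (hwi i hi1 hi2)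
      linarith
  have hCl : closure (intrinsicFrontier ℝ X \ B) = {p | p ∈ X ∧ M p = 1} := by
    apply Set.Subset.antisymm
    · apply closure_minimal
      · rintro p ⟨hp, hpB⟩
        rw [frontier_iff_aux hXcl] at hp
        refine ⟨hp.1, le_antisymm (hM1 p hp.1) ?_⟩
        by_contra hlt
        apply hp.2
        refine hint p hp.1 (not_le.1 hlt) fun i h1 h2 h3 => hpB ?_
        have := hp.1
        rw [hX] at this
        rw [hB]
        exact ⟨this.1, this.2, i, h1, h2, h3⟩
      · exact hXcl.inter (isClosed_eq hM continuous_const)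
    · rintro p ⟨hp, hMp⟩
      rcases hCiff p hp hMp with h | h | h
      · exact happ p hp b hb (fun i _ _ => hbpos i) (Or.inl h)
      · refine happ p hp (z 0) (hzs 0) (fun i h1 h2 => hzi _ _ ?_) (Or.inr (Or.inl ⟨h, hzj 0⟩))
        rintro rfl; simp at h1
      · refine happ p hp (z l) (hzs l) (fun i h1 h2 => hzi _ _ ?_) (Or.inr (Or.inr ⟨h, hzj l⟩))
        rintro rfl; simp [l] at h2; omega
  rw [hCl]
  let y : EuclideanSpace ℝ (Fin (k + 1)) := WithLp.toLp 2 fun i =>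
    ((k : ℝ) / 2 + 1) * ((if i = 0 then 1 else 0) + (if i = l then 1 else 0)) - 1
  have hysum : ∑ i, y i = 1 := by
    simp only [y]
    rw [Finset.sum_sub_distrib, ← Finset.mul_sum, Finset.sum_add_distrib]
    simp; ring
  have hy0 : y 0 = k / 2 := by simp [y, hl0.symm]
  have hyl : y l = k / 2 := by simp [y, hl0]
  have hyi : ∀ i, i ≠ 0 → i ≠ l → y i = -1 := fun i h1 h2 => by simp [y, h1, h2]
  clear_value y
  let q : E × EuclideanSpace ℝ (Fin (k + 1)) := (c, y)
  -- endpoint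
  have hend : ∀ p ∈ X, p + ((M p)⁻¹ - 1) • (p - q) ∈ X ∧ M (p + ((M p)⁻¹ - 1) • (p - q)) = 1 := by
    intro p hp
    have hp' := hp
    rw [hX] at hp'
    have m0 := hM0 p hp
    have m1 := hM1 p hp
    set μ := (M p)⁻¹ with hμ
    have hμ1 : 1 ≤ μ := (one_le_inv₀ m0).2 m1
    have hμM : μ * M p = 1 := inv_mul_cancel₀ m0.ne'
    set r := p + (μ - 1) • (p - q) with hr
    have hr1 : r.1 - c = μ • (p.1 - c) := by simp [r, q]; module
    have hr2 : ∀ i, r.2 i = y i + μ * (p.2 i - y i) := fun i => by simp [r, q]; ring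
    have hg1 : g (r.1 - c) = μ * g (p.1 - c) := by rw [hr1, hgs _ (by linarith)]
    have e0 : 1 - r.2 0 * (2 / k) = μ * (1 - p.2 0 * (2 / k)) := by
      rw [hr2, hy0]; field_simp; ring
    have el : 1 - r.2 l * (2 / k) = μ * (1 - p.2 l * (2 / k)) := by
      rw [hr2, hyl]; field_simp; ring
    have hMr : M r = 1 := by
      rw [← hμM]
      simp only [M]
      rw [hg1, e0, el, mul_max_of_nonneg _ _ (by linarith), mul_max_of_nonneg _ _ (by linarith)]
    refine ⟨?_, hMr⟩
    have b1 : g (r.1 - c) ≤ 1 := (le_max_left _ _).trans hMr.le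
    have b2 := (le_max_right _ _).trans hMr.le
    have b3 := (le_max_left _ _).trans b2
    have b4 := (le_max_right _ _).trans b2
    have hspr : r.1 ∈ affineSpan ℝ P := by
      have := AffineMap.lineMap_mem (k := ℝ) μ (subset_affineSpan ℝ P hcP)
        (subset_affineSpan ℝ P hp'.1)
      rw [AffineMap.lineMap_apply] at this
      have e : r.1 = μ • (p.1 - c) + c := by rw [← hr1]; simp
      rw [e]; exact this
    rw [hX]
    refine ⟨(hgP _ hspr).2 b1, fun i => ?_, ?_⟩
    · by_cases hi0 : i = 0
      · subst hi0
        by_contra hneg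
        have := mul_neg_of_neg_of_pos (not_le.1 hneg) h2k
        linarith
      by_cases hil : i = l
      · subst hil
        by_contra hneg
        have := mul_neg_of_neg_of_pos (not_le.1 hneg) h2k
        linarith
      rw [hr2, hyi i hi0 hil]
      nlinarith [hp'.2.1 i]
    · simp only [hr2]
      rw [Finset.sum_add_distrib, ← Finset.mul_sum, Finset.sum_sub_distrib, hysum, hp'.2.2]
      ring
  refine ⟨fun p hp => hp.1, fun a => a.1 + (a.2 * ((M a.1)⁻¹ - 1)) • (a.1 - q), ?_, ?_, ?_, ?_, ?_⟩
  · have hinv : ContinuousOn (fun a : (E × EuclideanSpace ℝ (Fin (k + 1))) × ℝ => (M a.1)⁻¹)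
        (X ×ˢ Set.Icc (0 : ℝ) 1) :=
      (hM.comp continuous_fst).continuousOn.inv₀ fun a ha => (hM0 _ ha.1).ne'
    fun_prop
  · intro p hp t ht
    have := hXcv hp (hend p hp).1 (sub_nonneg.2 ht.2) ht.1 (by ring)
    convert this using 1
    module
  · intro p hp; simp
  · intro p hp; simpa using hend p hp
  · rintro p ⟨hp, hMp⟩ t ht
    simp [hMp]

end aux

/-- For `n ≥ 3`, `k ≥ 2`, `m₁ + ⋯ + m_k = n − 1`, the closure of `∂X \ B` — where
`X = P_{m₁} × ⋯ × P_{m_k} × Δ^k`, `∂X` is the intrinsic frontier of `X`, and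
`B = P_{m₁} × ⋯ × P_{m_k} × (F_2 ∪ ⋯ ∪ F_k)` — is a strong deformation retract of `X`. -/
theorem product_retract (n k : ℕ) (hn : 3 ≤ n) (hk : 2 ≤ k) (m : Fin k → ℕ)
    (hm : ∀ r, 1 ≤ m r) (hsum : ∑ r, m r = n - 1) :
    ∀ X : Set (((r : Fin k) → EuclideanSpace ℝ (Fin (m r))) ×
          EuclideanSpace ℝ (Fin (k + 1))),
      X = {p | (∀ r, p.1 r ∈ permutahedron (m r)) ∧ p.2 ∈ simplexSet k} →
    ∀ B : Set (((r : Fin k) → EuclideanSpace ℝ (Fin (m r))) ×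
          EuclideanSpace ℝ (Fin (k + 1))),
      B = {p | (∀ r, p.1 r ∈ permutahedron (m r)) ∧ p.2 ∈ simplexSet k ∧
            ∃ i : Fin (k + 1), 1 ≤ (i : ℕ) ∧ (i : ℕ) ≤ k - 1 ∧ p.2 i = 0} →
    IsStrongDeformationRetract X (closure (intrinsicFrontier ℝ X \ B)) := by
  intro X hX B hB
  have hcl : ∀ r, IsClosed (permutahedron (m r)) := fun r =>
    ((Set.finite_range (permVec (m r))).isCompact_convexHull ℝ).isClosed
  refine main_aux (Set.univ.pi fun r => permutahedron (m r)) (isClosed_set_pi fun r _ => hcl r)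
    (convex_pi fun r _ => convex_convexHull ℝ _)
    (Set.univ_pi_nonempty_iff.2 fun r => (Set.range_nonempty _).convexHull) k hk X B ?_ ?_
  · rw [hX]; ext p; simp
  · rw [hB]; ext p; simp
end
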